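/- arXiv:1510.07098 — 9 statements merged into one kernel-verified Lean document; each statement's English description precedes it below -/
import Mathlib

section
/- Let ℰ be an exact structure on an abelian category 𝒜 such that 𝒜 has enough ℰ-projectives and enough ℰ-injectives, and let X → Y → Z be composable morphisms in 𝒜. Then the sequence 0 → X → Y → Z → 0 is a conflation (i.e., belongs to ℰ) if and only if for every ℰ-projective object P the induced sequence of abelian groups 0 → Hom(P,X) → Hom(P,Y) → Hom(P,Z) → 0 is exact. -/
open CategoryTheory Category Limits

universe v u

namespace ExactPaper

variable {𝒜 : Type u} [Category.{v} 𝒜] [Abelian 𝒜]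

/-- A morphism is an admissible monic w.r.t. a class `c` of short complexes if it occurs
as the first map of a member of `c`. -/
def AdmMono (c : ShortComplex 𝒜 → Prop) {X Y : 𝒜} (f : X ⟶ Y) : Prop :=
  ∃ (Z : 𝒜) (g : Y ⟶ Z) (w : f ≫ g = 0), c (ShortComplex.mk f g w)

/-- A morphism is an admissible epic w.r.t. a class `c` of short complexes if it occurs
as the second map of a member of `c`. -/
def AdmEpi (c : ShortComplex 𝒜 → Prop) {Y Z : 𝒜} (g : Y ⟶ Z) : Prop :=
  ∃ (X : 𝒜) (f : X ⟶ Y) (w : f ≫ g = 0), c (ShortComplex.mk f g w)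

/-- A (Quillen) exact structure on an abelian category `𝒜`: a class of short exact
sequences, called conflations, closed under isomorphisms, containing all split short
exact sequences, such that admissible monics and epics are closed under composition,
pushouts of admissible monics along arbitrary morphisms are admissible monics and
pullbacks of admissible epics along arbitrary morphisms are admissible epics. -/
structure ExactStructure (𝒜 : Type u) [Category.{v} 𝒜] [Abelian 𝒜] where
  conflation : ShortComplex 𝒜 → Prop
  shortExact_of_conflation : ∀ (S : ShortComplex 𝒜), conflation S → S.ShortExact
  conflation_of_iso : ∀ (S T : ShortComplex 𝒜), (S ≅ T) → conflation S → conflation T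
  conflation_of_splitting : ∀ (S : ShortComplex 𝒜), S.Splitting → conflation S
  admMono_comp : ∀ {X Y Z : 𝒜} (f : X ⟶ Y) (g : Y ⟶ Z),
    AdmMono conflation f → AdmMono conflation g → AdmMono conflation (f ≫ g)
  admEpi_comp : ∀ {X Y Z : 𝒜} (f : X ⟶ Y) (g : Y ⟶ Z),
    AdmEpi conflation f → AdmEpi conflation g → AdmEpi conflation (f ≫ g)
  admMono_pushout : ∀ {L M M' : 𝒜} (i : L ⟶ M) (f : L ⟶ M'),
    AdmMono conflation i → AdmMono conflation (pushout.inr i f)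
  admEpi_pullback : ∀ {M N M' : 𝒜} (p : M ⟶ N) (g : M' ⟶ N),
    AdmEpi conflation p → AdmEpi conflation (pullback.snd p g)

namespace ExactStructure

variable (E : ExactStructure 𝒜)

/-- An `ℰ`-projective object. -/
def EProjective (P : 𝒜) : Prop :=
  ∀ (S : ShortComplex 𝒜), E.conflation S → ∀ h : P ⟶ S.X₃, ∃ k : P ⟶ S.X₂, k ≫ S.g = h

/-- An `ℰ`-injective object. -/
def EInjective (I : 𝒜) : Prop :=
  ∀ (S : ShortComplex 𝒜), E.conflation S → ∀ h : S.X₁ ⟶ I, ∃ k : S.X₂ ⟶ I, S.f ≫ k = h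

/-- `𝒜` has enough `ℰ`-projectives. -/
def EnoughProjectives : Prop :=
  ∀ M : 𝒜, ∃ (K P : 𝒜) (i : K ⟶ P) (p : P ⟶ M) (w : i ≫ p = 0),
    E.conflation (ShortComplex.mk i p w) ∧ E.EProjective P

/-- `𝒜` has enough `ℰ`-injectives. -/
def EnoughInjectives : Prop :=
  ∀ M : 𝒜, ∃ (I C : 𝒜) (i : M ⟶ I) (p : I ⟶ C) (w : i ≫ p = 0),
    E.conflation (ShortComplex.mk i p w) ∧ E.EInjective I

/-- `Ext¹_ℰ(M,N) = 0`: every conflation `0 → N → Z → M → 0` splits. -/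
def Ext1Zero (M N : 𝒜) : Prop :=
  ∀ (Z : 𝒜) (i : N ⟶ Z) (p : Z ⟶ M) (w : i ≫ p = 0),
    E.conflation (ShortComplex.mk i p w) → ∃ r : Z ⟶ N, i ≫ r = 𝟙 N

/-- The right `ℰ`-orthogonal class `𝒳^⊥`. -/
def rightPerp (𝒳 : Set 𝒜) : Set 𝒜 := {N | ∀ X ∈ 𝒳, E.Ext1Zero X N}

/-- The left `ℰ`-orthogonal class `^⊥𝒴`. -/
def leftPerp (𝒴 : Set 𝒜) : Set 𝒜 := {M | ∀ Y ∈ 𝒴, E.Ext1Zero M Y}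

/-- A class is closed under `ℰ`-extensions. -/
def ClosedUnderExtensions (𝒯 : Set 𝒜) : Prop :=
  ∀ S : ShortComplex 𝒜, E.conflation S → S.X₁ ∈ 𝒯 → S.X₃ ∈ 𝒯 → S.X₂ ∈ 𝒯

/-- An `ℰ`-resolving class. -/
def Resolving (𝒯 : Set 𝒜) : Prop :=
  (∀ P : 𝒜, E.EProjective P → P ∈ 𝒯) ∧ E.ClosedUnderExtensions 𝒯 ∧
    ∀ S : ShortComplex 𝒜, E.conflation S → S.X₂ ∈ 𝒯 → S.X₃ ∈ 𝒯 → S.X₁ ∈ 𝒯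

/-- An `ℰ`-coresolving class. -/
def Coresolving (𝒯 : Set 𝒜) : Prop :=
  (∀ I : 𝒜, E.EInjective I → I ∈ 𝒯) ∧ E.ClosedUnderExtensions 𝒯 ∧
    ∀ S : ShortComplex 𝒜, E.conflation S → S.X₁ ∈ 𝒯 → S.X₂ ∈ 𝒯 → S.X₃ ∈ 𝒯

/-- `(𝒳,𝒴)` is a complete hereditary `ℰ`-cotorsion pair. -/
def CompleteHereditaryCotorsionPair (𝒳 𝒴 : Set 𝒜) : Prop :=
  𝒳 = E.leftPerp 𝒴 ∧ 𝒴 = E.rightPerp 𝒳 ∧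
  (∀ A : 𝒜, ∃ (Y X : 𝒜) (i : Y ⟶ X) (p : X ⟶ A) (w : i ≫ p = 0),
      E.conflation (ShortComplex.mk i p w) ∧ X ∈ 𝒳 ∧ Y ∈ 𝒴) ∧
  (∀ A : 𝒜, ∃ (Y' X' : 𝒜) (i : A ⟶ Y') (p : Y' ⟶ X') (w : i ≫ p = 0),
      E.conflation (ShortComplex.mk i p w) ∧ X' ∈ 𝒳 ∧ Y' ∈ 𝒴) ∧
  E.Resolving 𝒳

end ExactStructure

/-- `f : X ⟶ A` is an `𝒳`-precover of `A`. -/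
def IsPrecover (𝒳 : Set 𝒜) {X A : 𝒜} (f : X ⟶ A) : Prop :=
  X ∈ 𝒳 ∧ ∀ X' : 𝒜, X' ∈ 𝒳 → ∀ g : X' ⟶ A, ∃ h : X' ⟶ X, h ≫ f = g

/-- `f : X ⟶ A` is an `𝒳`-cover of `A`. -/
def IsCover (𝒳 : Set 𝒜) {X A : 𝒜} (f : X ⟶ A) : Prop :=
  IsPrecover 𝒳 f ∧ ∀ h : X ⟶ X, h ≫ f = f → IsIso h

/-- `f : A ⟶ Y` is a `𝒴`-preenvelope of `A`. -/
def IsPreenvelope (𝒴 : Set 𝒜) {A Y : 𝒜} (f : A ⟶ Y) : Prop :=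
  Y ∈ 𝒴 ∧ ∀ Y' : 𝒜, Y' ∈ 𝒴 → ∀ g : A ⟶ Y', ∃ h : Y ⟶ Y', f ≫ h = g

/-- `f : A ⟶ Y` is a `𝒴`-envelope of `A`. -/
def IsEnvelope (𝒴 : Set 𝒜) {A Y : 𝒜} (f : A ⟶ Y) : Prop :=
  IsPreenvelope 𝒴 f ∧ ∀ h : Y ⟶ Y, f ≫ h = f → IsIso h

/-- A class of objects closed under isomorphisms. -/
def ClosedUnderIsos (𝒳 : Set 𝒜) : Prop := ∀ X Y : 𝒜, (X ≅ Y) → X ∈ 𝒳 → Y ∈ 𝒳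

/-- A class of objects closed under direct summands. -/
def ClosedUnderDirectSummands (𝒳 : Set 𝒜) : Prop :=
  ∀ X Y : 𝒜, (∃ (s : Y ⟶ X) (r : X ⟶ Y), s ≫ r = 𝟙 Y) → X ∈ 𝒳 → Y ∈ 𝒳

end ExactPaper

namespace ExactPaper.ExactStructure

section Helpers

variable {𝒜 : Type u} [Category.{v} 𝒜] [Abelian 𝒜] (E : ExactStructure 𝒜)

lemma conflation_of_admEpi {X Y Z : 𝒜} (f : X ⟶ Y) (g : Y ⟶ Z) (w : f ≫ g = 0)
    (hf : IsLimit (KernelFork.ofι f w)) (h : AdmEpi E.conflation g) :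
    E.conflation (ShortComplex.mk f g w) := by
  obtain ⟨X', f', w', hc⟩ := h
  have hs := E.shortExact_of_conflation _ hc
  let e : X' ≅ X := IsLimit.conePointUniqueUpToIso hs.fIsKernel hf
  have he : e.hom ≫ f = f' :=
    IsLimit.conePointUniqueUpToIso_hom_comp hs.fIsKernel hf WalkingParallelPair.zero
  refine E.conflation_of_iso _ _ ?_ hc
  exact ShortComplex.isoMk e (Iso.refl _) (Iso.refl _) (by simp [he]) (by simp)

lemma conflation_of_admMono {X Y Z : 𝒜} (f : X ⟶ Y) (g : Y ⟶ Z) (w : f ≫ g = 0)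
    (hg : IsColimit (CokernelCofork.ofπ g w)) (h : AdmMono E.conflation f) :
    E.conflation (ShortComplex.mk f g w) := by
  obtain ⟨Z', g', w', hc⟩ := h
  have hs := E.shortExact_of_conflation _ hc
  let e : Z' ≅ Z := IsColimit.coconePointUniqueUpToIso hs.gIsCokernel hg
  have he : g' ≫ e.hom = g :=
    IsColimit.comp_coconePointUniqueUpToIso_hom hs.gIsCokernel hg WalkingParallelPair.one
  refine E.conflation_of_iso _ _ ?_ hc
  exact ShortComplex.isoMk (Iso.refl _) (Iso.refl _) e (by simp) (by simp [he])

lemma admEpi_of_section {Y Z : 𝒜} (g : Y ⟶ Z) (s : Z ⟶ Y) (hs : s ≫ g = 𝟙 Z) :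
    AdmEpi E.conflation g := by
  refine ⟨kernel g, kernel.ι g, kernel.condition g, E.conflation_of_splitting _ ?_⟩
  exact ShortComplex.Splitting.ofExactOfSection _
    (ShortComplex.exact_of_f_is_kernel _ (kernelIsKernel g)) s hs
    (inferInstanceAs (Mono (kernel.ι g)))

lemma admEpi_of_isPullback {A B C D : 𝒜} {a : A ⟶ B} {b : A ⟶ C} {p : B ⟶ D} {q : C ⟶ D}
    (h : IsPullback a b p q) (hp : AdmEpi E.conflation p) : AdmEpi E.conflation b := by
  have h1 := E.admEpi_comp h.isoPullback.hom _
    (E.admEpi_of_section _ h.isoPullback.inv (by simp)) (E.admEpi_pullback p q hp)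
  simpa using h1

lemma admMono_of_isPushout {A B C D : 𝒜} {i : A ⟶ B} {j : A ⟶ C} {a : B ⟶ D} {b : C ⟶ D}
    (h : IsPushout i j a b) (hi : AdmMono E.conflation i) : AdmMono E.conflation b := by
  obtain ⟨Z, g, w, hc⟩ := E.admMono_pushout i j hi
  refine ⟨Z, h.isoPushout.hom ≫ g, by simp [w], ?_⟩
  refine E.conflation_of_iso _ _ ?_ hc
  exact ShortComplex.isoMk (Iso.refl _) h.isoPushout.symm (Iso.refl _) (by simp) (by simp)

/-- Quillen's obscure axiom, for a kernel-cokernel pair. -/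
lemma obscure {P X Y Z : 𝒜} (f : X ⟶ Y) (g : Y ⟶ Z) (w : f ≫ g = 0)
    (hf : IsLimit (KernelFork.ofι f w)) (hg : IsColimit (CokernelCofork.ofπ g w))
    (h : P ⟶ Y) (hp : AdmEpi E.conflation (h ≫ g)) :
    E.conflation (ShortComplex.mk f g w) := by
  have pb : IsPullback (biprod.fst : P ⊞ Y ⟶ P) (biprod.map (h ≫ g) (𝟙 Y)) (h ≫ g)
      (biprod.fst : Z ⊞ Y ⟶ Z) :=
    ⟨⟨by simp⟩, ⟨PullbackCone.IsLimit.mk _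
      (fun s => biprod.lift s.fst (s.snd ≫ biprod.snd))
      (fun s => by simp)
      (fun s => by
        ext
        · simpa using s.condition
        · simp)
      (fun s m h1 h2 => by
        ext
        · simpa using h1
        · simp [← h2])⟩⟩
  have h1 := E.admEpi_of_isPullback pb hp
  have h2 : AdmEpi E.conflation (biprod.desc (𝟙 Z) g) :=
    E.admEpi_of_section _ biprod.inl (by simp)
  have h3 := E.admEpi_comp _ _ h1 h2
  have h4 : AdmEpi E.conflation
      (biprod.desc (biprod.lift (𝟙 P) (-h)) biprod.inr : P ⊞ Y ⟶ P ⊞ Y) :=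
    E.admEpi_of_section _ (biprod.desc (biprod.lift (𝟙 P) h) biprod.inr) (by
      ext <;> simp)
  have h5 := E.admEpi_comp _ _ h4 h3
  have e5 : (biprod.desc (biprod.lift (𝟙 P) (-h)) biprod.inr : P ⊞ Y ⟶ P ⊞ Y) ≫
      biprod.map (h ≫ g) (𝟙 Y) ≫ biprod.desc (𝟙 Z) g = biprod.snd ≫ g := by
    have e : (biprod.map (h ≫ g) (𝟙 Y) ≫ biprod.desc (𝟙 Z) g : P ⊞ Y ⟶ Z) =
        biprod.desc (h ≫ g) g := by
      ext <;> simp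
    rw [e]
    ext <;> simp [biprod.lift_desc]
  rw [e5] at h5
  have : Mono f := mono_of_isLimit_fork hf
  have w' : biprod.map (𝟙 P) f ≫ biprod.snd ≫ g = 0 := by simp [w]
  have hk : IsLimit (KernelFork.ofι (biprod.map (𝟙 P) f) w') :=
    KernelFork.IsLimit.ofι _ _
      (fun k hk => biprod.lift (k ≫ biprod.fst)
        (hf.lift (KernelFork.ofι (k ≫ biprod.snd) (by simpa using hk))))
      (fun k hk => by
        have := hf.fac (KernelFork.ofι (k ≫ biprod.snd) (by simpa using hk))
          WalkingParallelPair.zero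
        simp at this
        ext <;> simp [this])
      (fun k hk m hm => by
        have := hf.fac (KernelFork.ofι (k ≫ biprod.snd) (by simpa using hk))
          WalkingParallelPair.zero
        simp at this
        ext
        · simp [← hm]
        · rw [← cancel_mono f]
          simp [this, ← hm])
  have h6 : AdmMono E.conflation (biprod.map (𝟙 P) f) :=
    ⟨_, _, _, E.conflation_of_admEpi _ _ w' hk h5⟩
  have po : IsPushout (biprod.map (𝟙 P) f) (biprod.snd : P ⊞ X ⟶ X)
      (biprod.snd : P ⊞ Y ⟶ Y) f :=
    ⟨⟨by simp⟩, ⟨PushoutCocone.IsColimit.mk _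
      (fun s => biprod.inr ≫ s.inl)
      (fun s => by
        have := biprod.inl ≫= s.condition
        simp at this
        ext <;> simp [this])
      (fun s => by
        have := biprod.inr ≫= s.condition
        simpa using this)
      (fun s m h1 h2 => by
        simp [← h1])⟩⟩
  exact E.conflation_of_admMono f g w hg (E.admMono_of_isPushout po h6)

end Helpers

end ExactPaper.ExactStructure

open ExactPaper in
/-- **Lemma 2.3 (1)⇔(2)**: a short sequence `0 → X → Y → Z → 0` is a conflation iff
for every `ℰ`-projective object `P` the induced sequence of abelian groups
`0 → Hom(P,X) → Hom(P,Y) → Hom(P,Z) → 0` is exact. -/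
theorem conflation_iff_hom_from_eprojective_exact
    {𝒜 : Type u} [CategoryTheory.Category.{v} 𝒜] [CategoryTheory.Abelian 𝒜]
    (E : ExactPaper.ExactStructure 𝒜)
    (hproj : E.EnoughProjectives) (hinj : E.EnoughInjectives)
    {X Y Z : 𝒜} (f : X ⟶ Y) (g : Y ⟶ Z) :
    (∃ w : f ≫ g = 0, E.conflation (CategoryTheory.ShortComplex.mk f g w)) ↔
      ∀ P : 𝒜, E.EProjective P →
        Function.Injective (fun u : P ⟶ X => u ≫ f) ∧
        (∀ v : P ⟶ Y, v ≫ g = 0 ↔ ∃ u : P ⟶ X, u ≫ f = v) ∧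
        Function.Surjective (fun v : P ⟶ Y => v ≫ g) := by
  constructor
  · rintro ⟨w, hc⟩ P hP
    have hs := E.shortExact_of_conflation _ hc
    have : Mono f := hs.mono_f
    refine ⟨fun a b hab => (cancel_mono f).1 hab, fun v => ⟨fun hv => ?_, ?_⟩,
      fun v => hP _ hc v⟩
    · obtain ⟨l, hl⟩ := KernelFork.IsLimit.lift' hs.fIsKernel v hv
      exact ⟨l, hl⟩
    · rintro ⟨a, rfl⟩
      simp [w]
  · intro H
    have cover : ∀ M : 𝒜, ∃ (P : 𝒜) (p : P ⟶ M), Epi p ∧ AdmEpi E.conflation p ∧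
        E.EProjective P := by
      intro M
      obtain ⟨K, P, i, p, w, hc, hP⟩ := hproj M
      exact ⟨P, p, (E.shortExact_of_conflation _ hc).epi_g, ⟨K, i, w, hc⟩, hP⟩
    have hmono : Mono f := by
      refine Preadditive.mono_of_cancel_zero f fun {G} a ha => ?_
      obtain ⟨P, p, _, -, hP⟩ := cover G
      rw [← cancel_epi p, comp_zero]
      exact (H P hP).1 (by simp [ha])
    have w : f ≫ g = 0 := by
      obtain ⟨P, p, _, -, hP⟩ := cover X
      rw [← cancel_epi p, comp_zero, ← Category.assoc]
      exact ((H P hP).2.1 _).2 ⟨p, rfl⟩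
    obtain ⟨P, p, _, hpa, hP⟩ := cover Z
    obtain ⟨h, hh⟩ := (H P hP).2.2 p
    have hh : h ≫ g = p := hh
    have hepi : Epi g := by
      have : Epi (h ≫ g) := by rw [hh]; infer_instance
      exact epi_of_epi h g
    have hex : (ShortComplex.mk f g w).Exact := by
      rw [ShortComplex.exact_iff_exact_up_to_refinements]
      intro A x hx
      obtain ⟨Q, q, hq, -, hQ⟩ := cover A
      obtain ⟨a, ha⟩ := ((H Q hQ).2.1 (q ≫ x)).1 (by
        have hx : x ≫ g = 0 := hx
        simp [hx])
      exact ⟨Q, q, hq, a, ha.symm⟩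
    have hs : (ShortComplex.mk f g w).ShortExact :=
      { exact := hex, mono_f := hmono, epi_g := hepi }
    exact ⟨w, E.obscure f g w hs.fIsKernel hs.gIsCokernel h (by rw [hh]; exact hpa)⟩
end

section
/- Let ℰ be an exact structure on an abelian category 𝒜 such that 𝒜 has enough ℰ-projectives and enough ℰ-injectives, and let X → Y → Z be composable morphisms in 𝒜. Then the sequence 0 → X → Y → Z → 0 is a conflation (i.e., belongs to ℰ) if and only if for every ℰ-injective object I the induced sequence of abelian groups 0 → Hom(Z,I) → Hom(Y,I) → Hom(X,I) → 0 is exact. -/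
open CategoryTheory Category Limits

universe v u

-- helper lemmas
namespace ExactPaper.ExactStructure

open CategoryTheory Category Limits

/-- A short exact sequence whose first map is isomorphic to that of a conflation
is a conflation. -/
theorem conflation_of_iso₁₂ {𝒜 : Type u} [Category.{v} 𝒜] [Abelian 𝒜] (E : ExactStructure 𝒜)
    (S T : ShortComplex 𝒜) (hS : E.conflation S) (hT : T.ShortExact)
    (e₁ : S.X₁ ≅ T.X₁) (e₂ : S.X₂ ≅ T.X₂) (comm : e₁.hom ≫ T.f = S.f ≫ e₂.hom) :
    E.conflation T := by
  have hS' := E.shortExact_of_conflation S hS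
  have := hS'.epi_g
  have := hT.epi_g
  have comm' : T.f ≫ e₂.inv = e₁.inv ≫ S.f := by
    rw [Iso.comp_inv_eq, assoc, ← comm, Iso.inv_hom_id_assoc]
  have h1 : S.f ≫ e₂.hom ≫ T.g = 0 := by rw [← assoc, ← comm, assoc, T.zero, comp_zero]
  have h2 : T.f ≫ e₂.inv ≫ S.g = 0 := by rw [← assoc, comm', assoc, S.zero, comp_zero]
  have a1 : S.g ≫ hS'.exact.desc _ h1 = e₂.hom ≫ T.g := hS'.exact.g_desc _ h1
  have a2 : T.g ≫ hT.exact.desc _ h2 = e₂.inv ≫ S.g := hT.exact.g_desc _ h2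
  let e₃ : S.X₃ ≅ T.X₃ :=
    { hom := hS'.exact.desc _ h1
      inv := hT.exact.desc _ h2
      hom_inv_id := by
        rw [← cancel_epi S.g, ← assoc, a1, assoc, a2]; simp
      inv_hom_id := by
        rw [← cancel_epi T.g, ← assoc, a2, assoc, a1]; simp }
  exact E.conflation_of_iso S T (ShortComplex.isoMk e₁ e₂ e₃ comm a1.symm) hS

/-- A short exact sequence whose second map is isomorphic to that of a conflation
is a conflation. -/
theorem conflation_of_iso₂₃ {𝒜 : Type u} [Category.{v} 𝒜] [Abelian 𝒜] (E : ExactStructure 𝒜)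
    (S T : ShortComplex 𝒜) (hS : E.conflation S) (hT : T.ShortExact)
    (e₂ : S.X₂ ≅ T.X₂) (e₃ : S.X₃ ≅ T.X₃) (comm : e₂.hom ≫ T.g = S.g ≫ e₃.hom) :
    E.conflation T := by
  have hS' := E.shortExact_of_conflation S hS
  have := hS'.mono_f
  have := hT.mono_f
  have comm' : T.g ≫ e₃.inv = e₂.inv ≫ S.g := by
    rw [Iso.comp_inv_eq, assoc, ← comm, Iso.inv_hom_id_assoc]
  have h1 : (S.f ≫ e₂.hom) ≫ T.g = 0 := by rw [assoc, comm, ← assoc, S.zero, zero_comp]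
  have h2 : (T.f ≫ e₂.inv) ≫ S.g = 0 := by rw [assoc, ← comm', ← assoc, T.zero, zero_comp]
  have a1 : hT.exact.lift _ h1 ≫ T.f = S.f ≫ e₂.hom := hT.exact.lift_f _ h1
  have a2 : hS'.exact.lift _ h2 ≫ S.f = T.f ≫ e₂.inv := hS'.exact.lift_f _ h2
  let e₁ : S.X₁ ≅ T.X₁ :=
    { hom := hT.exact.lift _ h1
      inv := hS'.exact.lift _ h2
      hom_inv_id := by
        rw [← cancel_mono S.f, assoc, a2, ← assoc, a1]; simp
      inv_hom_id := by
        rw [← cancel_mono T.f, assoc, a1, ← assoc, a2]; simp }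
  exact E.conflation_of_iso S T (ShortComplex.isoMk e₁ e₂ e₃ a1 comm) hS

/-- Postcomposing an admissible monic with an isomorphism. -/
theorem admMono_comp_iso {𝒜 : Type u} [Category.{v} 𝒜] [Abelian 𝒜] (E : ExactStructure 𝒜)
    {A B C : 𝒜} (f : A ⟶ B) (e : B ≅ C) (h : AdmMono E.conflation f) :
    AdmMono E.conflation (f ≫ e.hom) := by
  obtain ⟨Z, g, w, hc⟩ := h
  refine ⟨Z, e.inv ≫ g, by simp [w], E.conflation_of_iso _ _ ?_ hc⟩
  exact ShortComplex.isoMk (Iso.refl _) e (Iso.refl _) (by simp) (by simp)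

/-- Cancellation of admissible monics, for a short exact sequence. -/
theorem conflation_of_admMono_comp {𝒜 : Type u} [Category.{v} 𝒜] [Abelian 𝒜]
    (E : ExactStructure 𝒜) {X Y Z : 𝒜} (f : X ⟶ Y) (g : Y ⟶ Z) (w : f ≫ g = 0)
    (hS : (ShortComplex.mk f g w).ShortExact) {I : 𝒜}
    (k : Y ⟶ I) (h : AdmMono E.conflation (f ≫ k)) :
    E.conflation (ShortComplex.mk f g w) := by
  have : Mono f := hS.mono_f
  have : Epi g := hS.epi_g
  -- the split monic `(f, 1)`
  have h1 : AdmMono E.conflation (biprod.lift f (𝟙 X)) := by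
    refine ⟨Y, biprod.desc (𝟙 Y) (-f), by simp, E.conflation_of_splitting _ ?_⟩
    exact
      { r := biprod.snd
        s := biprod.inl
        f_r := by simp
        s_g := by simp
        id := by
          ext <;> simp }
  -- `1 ⊕ fk` is a pushout of `fk`
  have hpo : IsPushout (f ≫ k) (biprod.inr : X ⟶ Y ⊞ X) (biprod.inr : I ⟶ Y ⊞ I)
      (biprod.map (𝟙 Y) (f ≫ k)) := by
    refine ⟨⟨by simp⟩, ⟨PushoutCocone.IsColimit.mk _
      (fun s => biprod.desc (biprod.inl ≫ s.inr) s.inl) ?_ ?_ ?_⟩⟩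
    · intro s; simp
    · intro s
      have := s.condition
      ext <;> simp at this ⊢
      exact this
    · intro s m hm1 hm2
      ext
      · simp [← hm2]
      · simp [← hm1]
  have h2 : AdmMono E.conflation (biprod.map (𝟙 Y) (f ≫ k)) := by
    have := E.admMono_comp_iso _ hpo.isoPushout.symm
      (E.admMono_pushout (f ≫ k) (biprod.inr : X ⟶ Y ⊞ X) h)
    simpa using this
  let e : Y ⊞ I ≅ Y ⊞ I :=
    { hom := biprod.lift biprod.fst (biprod.snd - biprod.fst ≫ k)
      inv := biprod.lift biprod.fst (biprod.snd + biprod.fst ≫ k)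
      hom_inv_id := by ext <;> simp
      inv_hom_id := by ext <;> simp }
  have h3 : AdmMono E.conflation (f ≫ (biprod.inl : Y ⟶ Y ⊞ I)) := by
    have := E.admMono_comp_iso _ e (E.admMono_comp _ _ h1 h2)
    convert this using 1
    ext <;> simp [e]
  obtain ⟨C, q, wq, hq⟩ := h3
  have w' : (f ≫ (biprod.inl : Y ⟶ Y ⊞ I)) ≫ biprod.map g (𝟙 I) = 0 := by
    simp [reassoc_of% w]
  have hT : (ShortComplex.mk _ _ w').ShortExact := by
    have : Epi (biprod.map g (𝟙 I)) := inferInstance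
    have : Mono (f ≫ (biprod.inl : Y ⟶ Y ⊞ I)) := mono_comp _ _
    refine ShortComplex.ShortExact.mk' (ShortComplex.exact_of_f_is_kernel _ ?_) this ‹_›
    refine KernelFork.IsLimit.ofι' _ _ (fun {A} t ht => ?_)
    have ht1 : (t ≫ biprod.fst) ≫ g = 0 := by
      have := ht =≫ biprod.fst
      simpa using this
    have ht2 : t ≫ biprod.snd = 0 := by
      have := ht =≫ biprod.snd
      simpa using this
    refine ⟨hS.exact.lift _ ht1, ?_⟩
    have := hS.exact.lift_f _ ht1
    dsimp at this ⊢
    ext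
    · simp [this]
    · simp [ht2]
  have h4 : AdmEpi E.conflation (biprod.map g (𝟙 I)) :=
    ⟨_, _, w', E.conflation_of_iso₁₂ _ _ hq hT (Iso.refl _) (Iso.refl _) (by simp)⟩
  have hpb : IsPullback (biprod.inl : Y ⟶ Y ⊞ I) g (biprod.map g (𝟙 I))
      (biprod.inl : Z ⟶ Z ⊞ I) := by
    refine ⟨⟨by simp⟩, ⟨PullbackCone.IsLimit.mk _ (fun s => s.fst ≫ biprod.fst) ?_ ?_ ?_⟩⟩
    · intro s
      have := s.condition =≫ biprod.snd
      ext
      · simp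
      · simpa using this.symm
    · intro s
      have := s.condition =≫ biprod.fst
      simpa using this
    · intro s m hm1 hm2
      simp [← hm1]
  obtain ⟨K, i, wi, hi⟩ := E.admEpi_pullback _ (biprod.inl : Z ⟶ Z ⊞ I) h4
  exact E.conflation_of_iso₂₃ _ _ hi hS hpb.isoPullback.symm (Iso.refl _) (by simp)

end ExactPaper.ExactStructure

/-- **Lemma 2.3 (1)⇔(3)**: a short sequence `0 → X → Y → Z → 0` is a conflation iff
for every `ℰ`-injective object `I` the induced sequence of abelian groups
`0 → Hom(Z,I) → Hom(Y,I) → Hom(X,I) → 0` is exact. -/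
theorem conflation_iff_hom_to_einjective_exact
    {𝒜 : Type u} [CategoryTheory.Category.{v} 𝒜] [CategoryTheory.Abelian 𝒜]
    (E : ExactPaper.ExactStructure 𝒜)
    (hproj : E.EnoughProjectives) (hinj : E.EnoughInjectives)
    {X Y Z : 𝒜} (f : X ⟶ Y) (g : Y ⟶ Z) :
    (∃ w : f ≫ g = 0, E.conflation (CategoryTheory.ShortComplex.mk f g w)) ↔
      ∀ I : 𝒜, E.EInjective I →
        Function.Injective (fun w : Z ⟶ I => g ≫ w) ∧
        (∀ v : Y ⟶ I, f ≫ v = 0 ↔ ∃ w : Z ⟶ I, g ≫ w = v) ∧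
        Function.Surjective (fun v : Y ⟶ I => f ≫ v) := by
  constructor
  · rintro ⟨w, hc⟩ I hI
    have hS := E.shortExact_of_conflation _ hc
    have : Epi g := hS.epi_g
    refine ⟨fun a b hab => (cancel_epi g).1 hab, fun v => ⟨fun hv => ?_, ?_⟩, fun h => hI _ hc h⟩
    · exact ⟨hS.exact.desc v hv, hS.exact.g_desc v hv⟩
    · rintro ⟨t, rfl⟩
      rw [← assoc, w, zero_comp]
  · intro H
    have emb : ∀ M : 𝒜, ∃ (I : 𝒜) (i : M ⟶ I), Mono i ∧ E.EInjective I ∧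
        ExactPaper.AdmMono E.conflation i := by
      intro M
      obtain ⟨I, C, i, p, w, hc, hI⟩ := hinj M
      exact ⟨I, i, (E.shortExact_of_conflation _ hc).mono_f, hI, C, p, w, hc⟩
    have hg : Epi g := by
      refine Preadditive.epi_of_cancel_zero _ (fun {C} t ht => ?_)
      obtain ⟨I, i, _, hI, -⟩ := emb C
      rw [← cancel_mono i, zero_comp]
      apply (H I hI).1
      simp [reassoc_of% ht]
    have w : f ≫ g = 0 := by
      obtain ⟨I, i, _, hI, -⟩ := emb Z
      rw [← cancel_mono i, zero_comp, assoc]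
      exact ((H I hI).2.1 _).2 ⟨i, rfl⟩
    obtain ⟨I, i, _, hI, hi⟩ := emb X
    obtain ⟨k, hk⟩ := (H I hI).2.2 i
    dsimp at hk
    have hf : Mono f := by
      have : Mono (f ≫ k) := by rw [hk]; infer_instance
      exact mono_of_mono f k
    refine ⟨w, E.conflation_of_admMono_comp _ _ _ ⟨?_⟩ k (by simpa [hk] using hi)⟩
    rw [ShortComplex.exact_iff_kernel_ι_comp_cokernel_π_zero]
    dsimp
    obtain ⟨J, j, _, hJ, -⟩ := emb (cokernel f)
    obtain ⟨t, ht⟩ := ((H J hJ).2.1 (cokernel.π f ≫ j)).1 (by simp)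
    rw [← cancel_mono j, zero_comp, assoc, ← ht, kernel.condition_assoc, zero_comp]
end

section
/- (Wakamatsu lemma, exact version, cover form) Let ℰ be an exact structure on an abelian category 𝒜 such that 𝒜 has enough ℰ-projectives and enough ℰ-injectives, and let 𝒳 be a class of objects of 𝒜 closed under ℰ-extensions (for every conflation 0 → A → B → C → 0 with A, C ∈ 𝒳 also B ∈ 𝒳). If f : X → A is an epimorphism with X ∈ 𝒳 that is an 𝒳-cover of A, then Ker f ∈ 𝒳^⊥, i.e., for every X' ∈ 𝒳 every conflation 0 → Ker f → M → X' → 0 splits. -/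
open CategoryTheory Category Limits

universe v u

open ExactPaper in
/-- **Wakamatsu lemma, exact version, cover form (Theorem 3.3(1))**: if `𝒳` is closed
under `ℰ`-extensions and `f : X ⟶ A` is an epimorphic `𝒳`-cover, then
`Ker f ∈ 𝒳^⊥`, i.e. every conflation `0 → Ker f → M → X' → 0` with `X' ∈ 𝒳` splits. -/
theorem wakamatsu_cover
    {𝒜 : Type u} [CategoryTheory.Category.{v} 𝒜] [CategoryTheory.Abelian 𝒜]
    (E : ExactStructure 𝒜)
    (hproj : E.EnoughProjectives) (hinj : E.EnoughInjectives)
    (𝒳 : Set 𝒜) (hext : E.ClosedUnderExtensions 𝒳)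
    {X A : 𝒜} (f : X ⟶ A) (hepi : CategoryTheory.Epi f) (hcover : IsCover 𝒳 f) :
    CategoryTheory.Limits.kernel f ∈ E.rightPerp 𝒳 := by
  intro X' hX' M i p w hc
  obtain ⟨⟨hX, hpre⟩, hmin⟩ := hcover
  have hS := E.shortExact_of_conflation _ hc
  have hSe := hS.epi_g
  dsimp at hSe
  let k := kernel.ι f
  obtain ⟨Z, g, wg, hg⟩ := E.admMono_pushout i k ⟨X', p, w, hc⟩
  have hT := E.shortExact_of_conflation _ hg
  let q : pushout i k ⟶ X' := pushout.desc p 0 (by simp [w])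
  have hq1 : pushout.inl i k ≫ q = p := pushout.inl_desc _ _ _
  have hq2 : pushout.inr i k ≫ q = 0 := pushout.inr_desc _ _ _
  have hTe := hT.epi_g
  dsimp at hTe
  -- the comparison isomorphism between the two cokernels
  obtain ⟨a, ha⟩ : ∃ a : Z ⟶ X', g ≫ a = q :=
    ⟨hT.exact.desc q hq2, hT.exact.g_desc q hq2⟩
  have hz : i ≫ pushout.inl i k ≫ g = 0 := by
    rw [pushout.condition_assoc, wg, comp_zero]
  obtain ⟨b, hb⟩ : ∃ b : X' ⟶ Z, p ≫ b = pushout.inl i k ≫ g :=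
    ⟨hS.exact.desc _ hz, hS.exact.g_desc _ hz⟩
  have hqb : q ≫ b = g := by
    apply pushout.hom_ext
    · rw [← assoc, hq1, hb]
    · rw [← assoc, hq2, wg, zero_comp]
  have hab : a ≫ b = 𝟙 Z := by
    rw [← cancel_epi g, ← assoc, ha, hqb, comp_id]
  have hba : b ≫ a = 𝟙 X' := by
    rw [← cancel_epi p, ← assoc, hb, assoc, ha, hq1, comp_id]
  have hconf : E.conflation (ShortComplex.mk (pushout.inr i k) q hq2) :=
    E.conflation_of_iso (ShortComplex.mk (pushout.inr i k) g wg) _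
      (ShortComplex.isoMk (Iso.refl _) (Iso.refl _) ⟨a, b, hab, hba⟩
        (by simp) (by simp [ha])) hg
  have hP : pushout i k ∈ 𝒳 := hext _ hconf hX hX'
  let t : pushout i k ⟶ A := pushout.desc 0 f (by simp [k])
  have ht1 : pushout.inl i k ≫ t = 0 := pushout.inl_desc _ _ _
  have ht2 : pushout.inr i k ≫ t = f := pushout.inr_desc _ _ _
  obtain ⟨h, hh⟩ := hpre _ hP t
  have hu : (pushout.inr i k ≫ h) ≫ f = f := by rw [assoc, hh, ht2]
  have hiso := hmin _ hu
  have huf : inv (pushout.inr i k ≫ h) ≫ f = f := by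
    rw [IsIso.inv_comp_eq, hu]
  have hm : (pushout.inl i k ≫ h ≫ inv (pushout.inr i k ≫ h)) ≫ f = 0 := by
    rw [assoc, assoc, huf, hh, ht1]
  refine ⟨kernel.lift f _ hm, ?_⟩
  rw [← cancel_mono (kernel.ι f), assoc, kernel.lift_ι, pushout.condition_assoc,
    ← assoc (pushout.inr i k), IsIso.hom_inv_id, comp_id, id_comp]
end

section
/- (Wakamatsu lemma, exact version, envelope form) Let ℰ be an exact structure on an abelian category 𝒜 such that 𝒜 has enough ℰ-projectives and enough ℰ-injectives, and let 𝒳 be a class of objects of 𝒜 closed under ℰ-extensions (for every conflation 0 → A → B → C → 0 with A, C ∈ 𝒳 also B ∈ 𝒳). If f : A → X is a monomorphism with X ∈ 𝒳 that is an 𝒳-envelope of A, then Coker f ∈ ^⊥𝒳, i.e., for every X' ∈ 𝒳 every conflation 0 → X' → M → Coker f → 0 splits. -/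
open CategoryTheory Category Limits

universe v u

open ExactPaper in
/-- **Wakamatsu lemma, exact version, envelope form (Theorem 3.3(2))**: if `𝒳` is closed
under `ℰ`-extensions and `f : A ⟶ X` is a monomorphic `𝒳`-envelope, then
`Coker f ∈ ^⊥𝒳`, i.e. every conflation `0 → X' → M → Coker f → 0` with `X' ∈ 𝒳`
splits. -/
theorem wakamatsu_envelope
    {𝒜 : Type u} [CategoryTheory.Category.{v} 𝒜] [CategoryTheory.Abelian 𝒜]
    (E : ExactStructure 𝒜)
    (hproj : E.EnoughProjectives) (hinj : E.EnoughInjectives)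
    (𝒳 : Set 𝒜) (hext : E.ClosedUnderExtensions 𝒳)
    {A X : 𝒜} (f : A ⟶ X) (hmono : CategoryTheory.Mono f) (henv : IsEnvelope 𝒳 f) :
    CategoryTheory.Limits.cokernel f ∈ E.leftPerp 𝒳 := by
  intro X' hX' M i p w hc
  have hS := E.shortExact_of_conflation _ hc
  have hmi : Mono i := hS.mono_f
  have hei : Epi p := hS.epi_g
  let π := cokernel.π f
  obtain ⟨j, hj, wi⟩ : ∃ j : X' ⟶ pullback p π,
      j ≫ pullback.fst p π = i ∧ j ≫ pullback.snd p π = 0 :=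
    ⟨pullback.lift i 0 (by rw [w, zero_comp]), pullback.lift_fst _ _ _, pullback.lift_snd _ _ _⟩
  have hker : IsLimit (KernelFork.ofι _ wi) := by
    have hk := hS.fIsKernel
    refine KernelFork.IsLimit.ofι _ wi
      (fun {W} g hg => KernelFork.IsLimit.lift' hk (g ≫ pullback.fst p π) ?_ |>.1) ?_ ?_
    · change (g ≫ pullback.fst p π) ≫ p = 0
      rw [assoc, pullback.condition, reassoc_of% hg, zero_comp]
    · intro W g hg
      have hz : (g ≫ pullback.fst p π) ≫ p = 0 := by
        rw [assoc, pullback.condition, reassoc_of% hg, zero_comp]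
      have h1 : (KernelFork.IsLimit.lift' hk (g ≫ pullback.fst p π) hz).1 ≫ i
          = g ≫ pullback.fst p π := (KernelFork.IsLimit.lift' hk _ hz).2
      apply pullback.hom_ext
      · rw [assoc, hj]; exact h1
      · rw [assoc, wi]; exact comp_zero.trans hg.symm
    · intro W g hg m hm
      have hz : (g ≫ pullback.fst p π) ≫ p = 0 := by
        rw [assoc, pullback.condition, reassoc_of% hg, zero_comp]
      have h1 : (KernelFork.IsLimit.lift' hk (g ≫ pullback.fst p π) hz).1 ≫ i
          = g ≫ pullback.fst p π := (KernelFork.IsLimit.lift' hk _ hz).2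
      rw [← cancel_mono i]
      refine Eq.trans ?_ h1.symm
      rw [← hm, assoc, hj]
  obtain ⟨K, k, wk, hK⟩ := E.admEpi_pullback p π ⟨X', i, w, hc⟩
  have hKk := (E.shortExact_of_conflation _ hK).fIsKernel
  have hconf : E.conflation (ShortComplex.mk _ _ wi) := by
    refine E.conflation_of_iso _ _ ?_ hK
    refine ShortComplex.isoMk (hKk.conePointUniqueUpToIso hker) (Iso.refl _) (Iso.refl _) ?_ ?_
    · have := hKk.conePointUniqueUpToIso_hom_comp hker WalkingParallelPair.zero
      simpa using this
    · simp
  have hB : pullback p π ∈ 𝒳 := hext _ hconf hX' henv.1.1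
  obtain ⟨h, hh⟩ := henv.1.2 _ hB (pullback.lift (f := p) (g := π) 0 f (by simp [π]))
  have hf : f ≫ (h ≫ pullback.snd p π) = f := by
    rw [reassoc_of% hh, pullback.lift_snd]
  have hiso : IsIso (h ≫ pullback.snd p π) := henv.2 _ hf
  have hfi : f ≫ inv (h ≫ pullback.snd p π) = f := by
    rw [IsIso.comp_inv_eq, hf]
  have h0 : f ≫ (inv (h ≫ pullback.snd p π) ≫ h ≫ pullback.fst p π) = 0 := by
    rw [reassoc_of% hfi, reassoc_of% hh, pullback.lift_fst]
  have hs : cokernel.desc f _ h0 ≫ p = 𝟙 _ := by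
    rw [← cancel_epi (cokernel.π f), cokernel.π_desc_assoc, comp_id]
    have : inv (h ≫ pullback.snd p π) ≫ h ≫ pullback.snd p π = 𝟙 X := IsIso.inv_hom_id _
    simp only [assoc]
    rw [pullback.condition, reassoc_of% this]
  let sp := ShortComplex.Splitting.ofExactOfSection _ hS.exact _ hs hmi
  exact ⟨sp.r, sp.f_r⟩
end

section
/- Let ℰ be an exact structure on an abelian category 𝒜 such that 𝒜 has enough ℰ-projectives and enough ℰ-injectives, and let (𝒳,𝒴) be a pair of classes of objects of 𝒜 closed under isomorphisms and direct summands. Suppose 𝒴 is ℰ-coresolving, 𝒳 = ^⊥𝒴, and every object A of 𝒜 admits a monomorphic 𝒴-preenvelope j : A → Y with Coker j ∈ 𝒳. Then 𝒳 is ℰ-resolving, 𝒴 = 𝒳^⊥, and every object A of 𝒜 admits an epimorphic 𝒳-precover p : X → A with Ker p ∈ 𝒴. -/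
open CategoryTheory Category Limits

universe v u

namespace ExactPaper

namespace ExactStructure

variable {𝒜 : Type u} [Category.{v} 𝒜] [Abelian 𝒜] (E : ExactStructure 𝒜)

theorem conflation_pushout {A B M N Q : 𝒜} {i : A ⟶ B} {p : B ⟶ M} {w : i ≫ p = 0}
    (hS : E.conflation (ShortComplex.mk i p w)) {f : A ⟶ N} {a : B ⟶ Q} {b : N ⟶ Q}
    (hQ : IsPushout i f a b) {d : Q ⟶ M} (ha : a ≫ d = p) (hb : b ≫ d = 0) :
    E.conflation (ShortComplex.mk b d hb) := by
  obtain ⟨Z, g, w', hT⟩ := E.admMono_pushout i f ⟨M, p, w, hS⟩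
  have hS' := E.shortExact_of_conflation _ hS
  have hT' := E.shortExact_of_conflation _ hT
  have := hS'.epi_g
  have := hT'.epi_g
  dsimp at *
  let θ := hQ.isoPushout
  have h1 : pushout.inl i f ≫ θ.inv = a := hQ.inl_isoPushout_inv
  have h2 : pushout.inr i f ≫ θ.inv = b := hQ.inr_isoPushout_inv
  have h3 : a ≫ θ.hom = pushout.inl i f := hQ.inl_isoPushout_hom
  obtain ⟨u, hu⟩ : ∃ u : Z ⟶ M, g ≫ u = θ.inv ≫ d :=
    ⟨hT'.exact.desc (θ.inv ≫ d) (by dsimp; rw [reassoc_of% h2, hb]), hT'.exact.g_desc _ _⟩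
  obtain ⟨v, hv⟩ : ∃ v : M ⟶ Z, p ≫ v = pushout.inl i f ≫ g :=
    ⟨hS'.exact.desc (pushout.inl i f ≫ g)
      (by dsimp; rw [pushout.condition_assoc, w', comp_zero]), hS'.exact.g_desc _ _⟩
  have huv : u ≫ v = 𝟙 Z := by
    rw [← cancel_epi g, reassoc_of% hu, comp_id]
    apply pushout.hom_ext
    · rw [reassoc_of% h1, reassoc_of% ha, hv]
    · rw [reassoc_of% h2, reassoc_of% hb, zero_comp, w']
  have hvu : v ≫ u = 𝟙 M := by
    rw [← cancel_epi p, reassoc_of% hv, comp_id, hu, reassoc_of% h1, ha]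
  refine E.conflation_of_iso (ShortComplex.mk (pushout.inr i f) g w') (ShortComplex.mk b d hb)
    (ShortComplex.isoMk (Iso.refl N) θ.symm ⟨u, v, huv, hvu⟩ ?_ ?_) hT
  · simp [h2]
  · simp [hu]

theorem conflation_pullback {A B M N Q : 𝒜} {i : A ⟶ B} {p : B ⟶ M} {w : i ≫ p = 0}
    (hS : E.conflation (ShortComplex.mk i p w)) {f : N ⟶ M} {a : Q ⟶ B} {b : Q ⟶ N}
    (hQ : IsPullback a b p f) {d : A ⟶ Q} (ha : d ≫ a = i) (hb : d ≫ b = 0) :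
    E.conflation (ShortComplex.mk d b hb) := by
  obtain ⟨Z, g, w', hT⟩ := E.admEpi_pullback p f ⟨A, i, w, hS⟩
  have hS' := E.shortExact_of_conflation _ hS
  have hT' := E.shortExact_of_conflation _ hT
  have := hS'.mono_f
  have := hT'.mono_f
  dsimp at *
  let θ := hQ.isoPullback
  have h1 : θ.hom ≫ pullback.fst p f = a := hQ.isoPullback_hom_fst
  have h2 : θ.hom ≫ pullback.snd p f = b := hQ.isoPullback_hom_snd
  obtain ⟨u, hu⟩ : ∃ u : A ⟶ Z, u ≫ g = d ≫ θ.hom :=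
    ⟨hT'.exact.lift (d ≫ θ.hom) (by dsimp; rw [assoc, h2, hb]), hT'.exact.lift_f _ _⟩
  obtain ⟨v, hv⟩ : ∃ v : Z ⟶ A, v ≫ i = g ≫ pullback.fst p f :=
    ⟨hS'.exact.lift (g ≫ pullback.fst p f)
      (by dsimp; rw [assoc, pullback.condition, reassoc_of% w', zero_comp]), hS'.exact.lift_f _ _⟩
  have hvu : v ≫ u = 𝟙 Z := by
    rw [← cancel_mono g, assoc, hu, id_comp]
    apply pullback.hom_ext
    · rw [assoc, assoc, h1, ha, hv]
    · rw [assoc, assoc, h2, hb, comp_zero, w']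
  have huv : u ≫ v = 𝟙 A := by
    rw [← cancel_mono i, assoc, hv, id_comp, reassoc_of% hu, h1, ha]
  refine E.conflation_of_iso (ShortComplex.mk g (pullback.snd p f) w') (ShortComplex.mk d b hb)
    (ShortComplex.isoMk ⟨v, u, hvu, huv⟩ θ.symm (Iso.refl N) ?_ ?_) hT
  · dsimp
    rw [← cancel_mono θ.hom, assoc, assoc, θ.inv_hom_id, comp_id, ← hu, ← assoc, hvu, id_comp]
  · dsimp
    rw [← h2, θ.inv_hom_id_assoc, comp_id]

/-- If a short exact sequence maps to a conflation with the identity on the left,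
it is a conflation. -/
theorem conflation_of_factor {A I C Y X : 𝒜} {i : A ⟶ I} {q : I ⟶ C} {w : i ≫ q = 0}
    (hS : E.conflation (ShortComplex.mk i q w)) {j : A ⟶ Y} {π : Y ⟶ X} {w' : j ≫ π = 0}
    (hT : (ShortComplex.mk j π w').ShortExact) (h : Y ⟶ I) (hh : j ≫ h = i) :
    E.conflation (ShortComplex.mk j π w') := by
  have := hT.epi_g
  dsimp at *
  obtain ⟨h', hh'⟩ : ∃ h' : X ⟶ C, π ≫ h' = h ≫ q :=
    ⟨hT.exact.desc (h ≫ q) (by dsimp; rw [reassoc_of% hh, w]), hT.exact.g_desc _ _⟩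
  let d : A ⟶ pullback q h' := pullback.lift i 0 (by rw [w, zero_comp])
  have hb : d ≫ pullback.snd q h' = 0 := pullback.lift_snd _ _ _
  have hc : E.conflation (ShortComplex.mk d (pullback.snd q h') hb) :=
    E.conflation_pullback hS (IsPullback.of_hasPullback q h') (pullback.lift_fst _ _ _) hb
  have hc' := E.shortExact_of_conflation _ hc
  let φ : ShortComplex.mk j π w' ⟶ ShortComplex.mk d (pullback.snd q h') hb :=
    { τ₁ := 𝟙 A
      τ₂ := pullback.lift h π hh'.symm
      τ₃ := 𝟙 X
      comm₁₂ := by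
        dsimp
        rw [id_comp]
        apply pullback.hom_ext
        · rw [pullback.lift_fst, assoc, pullback.lift_fst, hh]
        · rw [pullback.lift_snd, assoc, pullback.lift_snd, w']
      comm₂₃ := by
        dsimp
        rw [pullback.lift_snd, comp_id] }
  have : IsIso φ.τ₁ := inferInstanceAs (IsIso (𝟙 A))
  have : IsIso φ.τ₃ := inferInstanceAs (IsIso (𝟙 X))
  have : IsIso φ.τ₂ := ShortComplex.isIso₂_of_shortExact_of_isIso₁₃ φ hT hc'
  have : IsIso φ := ShortComplex.isIso_of_isIso φ
  exact E.conflation_of_iso _ _ (asIso φ).symm hc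

theorem extend_of_ext {A B M N : 𝒜} {i : A ⟶ B} {p : B ⟶ M} {w : i ≫ p = 0}
    (hS : E.conflation (ShortComplex.mk i p w)) (h : E.Ext1Zero M N) (f : A ⟶ N) :
    ∃ g : B ⟶ N, i ≫ g = f := by
  have hb : pushout.inr i f ≫ pushout.desc p 0 (by rw [w, comp_zero]) = 0 :=
    pushout.inr_desc _ _ _
  obtain ⟨r, hr⟩ := h _ _ _ hb (E.conflation_pushout hS (IsPushout.of_hasPushout i f)
    (pushout.inl_desc _ _ _) hb)
  exact ⟨pushout.inl i f ≫ r, by rw [pushout.condition_assoc, hr, comp_id]⟩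

theorem lift_of_ext {N I C M : 𝒜} {i : N ⟶ I} {p : I ⟶ C} {w : i ≫ p = 0}
    (hS : E.conflation (ShortComplex.mk i p w)) (h : E.Ext1Zero M N) (f : M ⟶ C) :
    ∃ g : M ⟶ I, g ≫ p = f := by
  have hb : pullback.lift i 0 (by rw [w, zero_comp]) ≫ pullback.snd p f = 0 :=
    pullback.lift_snd _ _ _
  have hc := E.conflation_pullback hS (IsPullback.of_hasPullback p f)
    (pullback.lift_fst _ _ _) hb
  obtain ⟨r, hr⟩ := h _ _ _ hb hc
  have hc' := E.shortExact_of_conflation _ hc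
  let σ := ShortComplex.Splitting.ofExactOfRetraction _ hc'.exact r hr hc'.epi_g
  have hσ : σ.s ≫ pullback.snd p f = 𝟙 M := σ.s_g
  exact ⟨σ.s ≫ pullback.fst p f, by
    rw [assoc, pullback.condition, reassoc_of% hσ]⟩

theorem ext_of_lift {N I C M : 𝒜} {i : N ⟶ I} {p : I ⟶ C} {w : i ≫ p = 0}
    (hS : E.conflation (ShortComplex.mk i p w)) (hI : E.EInjective I)
    (h : ∀ f : M ⟶ C, ∃ g : M ⟶ I, g ≫ p = f) : E.Ext1Zero M N := by
  intro Z i' p' w' hT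
  have hS' := E.shortExact_of_conflation _ hS
  have hT' := E.shortExact_of_conflation _ hT
  have := hS'.mono_f
  have := hT'.epi_g
  obtain ⟨k, hk⟩ := hI _ hT i
  dsimp at *
  obtain ⟨f, hf⟩ : ∃ f : M ⟶ C, p' ≫ f = k ≫ p :=
    ⟨hT'.exact.desc (k ≫ p) (by dsimp; rw [reassoc_of% hk, w]), hT'.exact.g_desc _ _⟩
  obtain ⟨g, hg⟩ := h f
  obtain ⟨r, hr⟩ : ∃ r : Z ⟶ N, r ≫ i = k - p' ≫ g :=
    ⟨hS'.exact.lift (k - p' ≫ g) (by dsimp; simp [hg, hf]), hS'.exact.lift_f _ _⟩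
  refine ⟨r, ?_⟩
  rw [← cancel_mono i, assoc, hr]
  simp [hk, reassoc_of% w']

end ExactStructure

end ExactPaper

open ExactPaper CategoryTheory Limits in
/-- **Theorem 3.4, (2) ⇒ (1)**: if `𝒴` is `ℰ`-coresolving, `𝒳 = ^⊥𝒴`, and every object
admits a monomorphic `𝒴`-preenvelope with cokernel in `𝒳`, then `𝒳` is `ℰ`-resolving,
`𝒴 = 𝒳^⊥`, and every object admits an epimorphic `𝒳`-precover with kernel in `𝒴`. -/
theorem resolving_of_coresolving
    {𝒜 : Type u} [Category.{v} 𝒜] [Abelian 𝒜]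
    (E : ExactStructure 𝒜)
    (hproj : E.EnoughProjectives) (hinj : E.EnoughInjectives)
    (𝒳 𝒴 : Set 𝒜)
    (hXiso : ClosedUnderIsos 𝒳) (hXsum : ClosedUnderDirectSummands 𝒳)
    (hYiso : ClosedUnderIsos 𝒴) (hYsum : ClosedUnderDirectSummands 𝒴)
    (hcores : E.Coresolving 𝒴) (hperp : 𝒳 = E.leftPerp 𝒴)
    (henv : ∀ A : 𝒜, ∃ (Y : 𝒜) (j : A ⟶ Y),
      Mono j ∧ IsPreenvelope 𝒴 j ∧ cokernel j ∈ 𝒳) :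
    E.Resolving 𝒳 ∧ 𝒴 = E.rightPerp 𝒳 ∧
      ∀ A : 𝒜, ∃ (X : 𝒜) (p : X ⟶ A), Epi p ∧ IsPrecover 𝒳 p ∧ kernel p ∈ 𝒴 := by
  have hext : ∀ X ∈ 𝒳, ∀ Y ∈ 𝒴, E.Ext1Zero X Y := by
    intro X hX
    rw [hperp] at hX
    exact hX
  obtain ⟨hYinj, -, hYcok⟩ := hcores
  have hmem : ∀ M : 𝒜, (∀ Y ∈ 𝒴, ∀ (I C : 𝒜) (i : Y ⟶ I) (p : I ⟶ C) (w : i ≫ p = 0),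
      E.conflation (ShortComplex.mk i p w) → E.EInjective I → C ∈ 𝒴 →
      ∀ f : M ⟶ C, ∃ g : M ⟶ I, g ≫ p = f) → M ∈ 𝒳 := by
    intro M h
    rw [hperp]
    intro Y hY
    obtain ⟨I, C, i, p, w, hc, hI⟩ := hinj Y
    exact E.ext_of_lift hc hI
      (h Y hY I C i p w hc hI (hYcok _ hc hY (hYinj I hI)))
  have hconf : ∀ A : 𝒜, ∃ (Y X : 𝒜) (j : A ⟶ Y) (π : Y ⟶ X) (w : j ≫ π = 0),
      E.conflation (ShortComplex.mk j π w) ∧ Y ∈ 𝒴 ∧ X ∈ 𝒳 := by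
    intro A
    obtain ⟨Y, j, hj, ⟨hY, hpre⟩, hX⟩ := henv A
    obtain ⟨I, C, i, p, w, hc, hI⟩ := hinj A
    obtain ⟨h, hh⟩ := hpre I (hYinj I hI) i
    refine ⟨Y, cokernel j, j, cokernel.π j, cokernel.condition j, ?_, hY, hX⟩
    have hex : (ShortComplex.mk j (cokernel.π j) (cokernel.condition j)).ShortExact :=
      { exact := ShortComplex.exact_cokernel j
        mono_f := hj
        epi_g := inferInstanceAs (Epi (cokernel.π j)) }
    exact E.conflation_of_factor hc hex h hh
  have hproj' : ∀ P : 𝒜, E.EProjective P → P ∈ 𝒳 := by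
    intro P hP
    exact hmem P fun Y hY I C i p w hc hI hC f => hP _ hc f
  have hextn : E.ClosedUnderExtensions 𝒳 := by
    intro S hS hA hC
    have hS' := E.shortExact_of_conflation _ hS
    have := hS'.epi_g
    refine hmem _ fun Y hY I C i p w hc hI hC' f => ?_
    obtain ⟨a, ha⟩ := E.lift_of_ext hc (hext _ hA Y hY) (S.f ≫ f)
    obtain ⟨b, hb⟩ := hI _ hS a
    obtain ⟨t, ht⟩ : ∃ t : S.X₃ ⟶ C, S.g ≫ t = f - b ≫ p :=
      ⟨hS'.exact.desc (f - b ≫ p) (by simp [reassoc_of% hb, ha]), hS'.exact.g_desc _ _⟩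
    obtain ⟨c, hc'⟩ := E.lift_of_ext hc (hext _ hC Y hY) t
    exact ⟨b + S.g ≫ c, by simp [hc', ht]⟩
  refine ⟨⟨hproj', hextn, ?_⟩, ?_, ?_⟩
  · intro S hS hB hC
    refine hmem _ fun Y hY I C i p w hc hI hC' f => ?_
    obtain ⟨g, hg⟩ := E.extend_of_ext (w := S.zero) hS (hext _ hC C hC') f
    obtain ⟨k, hk⟩ := E.lift_of_ext hc (hext _ hB Y hY) g
    exact ⟨S.f ≫ k, by rw [assoc, hk, hg]⟩
  · ext N
    refine ⟨fun hN X hX => hext X hX N hN, fun hN => ?_⟩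
    obtain ⟨Y, X, j, π, w, hc, hY, hX⟩ := hconf N
    obtain ⟨r, hr⟩ := hN X hX _ _ _ w hc
    exact hYsum Y N ⟨j, r, hr⟩ hY
  · intro A
    obtain ⟨K, P, i, p, w, hc, hP⟩ := hproj A
    obtain ⟨Y, X, j, π, w', hc', hY, hX⟩ := hconf K
    have hb : pushout.inr i j ≫ pushout.desc p 0 (by rw [w, comp_zero]) = 0 :=
      pushout.inr_desc _ _ _
    have hb' : pushout.inl i j ≫ pushout.desc 0 π (by rw [w', comp_zero]) = 0 :=
      pushout.inl_desc _ _ _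
    have h1 := E.conflation_pushout hc (IsPushout.of_hasPushout i j)
      (pushout.inl_desc _ _ _) hb
    have h2 := E.conflation_pushout hc' (IsPushout.of_hasPushout i j).flip
      (pushout.inr_desc _ _ _) hb'
    have hs := E.shortExact_of_conflation _ h1
    refine ⟨pushout i j, pushout.desc p 0 (by rw [w, comp_zero]), hs.epi_g,
      ⟨hextn (ShortComplex.mk _ _ hb') h2 (hproj' P hP) hX, ?_⟩, ?_⟩
    · intro X' hX' g
      exact E.lift_of_ext h1 (hext X' hX' Y hY) g
    · have := hs.mono_f
      exact hYiso _ _ (IsLimit.conePointUniqueUpToIso hs.fIsKernel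
        (limit.isLimit _)) hY
end

section
/- Let ℰ be an exact structure on an abelian category 𝒜 such that 𝒜 has enough ℰ-projectives and enough ℰ-injectives, and let (𝒳,𝒴) be a pair of classes of objects of 𝒜 closed under isomorphisms and direct summands. Suppose 𝒳 is ℰ-resolving, 𝒴 = 𝒳^⊥, and every object A of 𝒜 admits an epimorphic 𝒳-precover p : X → A with Ker p ∈ 𝒴. Then 𝒴 is ℰ-coresolving, 𝒳 = ^⊥𝒴, and every object A of 𝒜 admits a monomorphic 𝒴-preenvelope j : A → Y with Coker j ∈ 𝒳. -/
open CategoryTheory Category Limits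

universe v u

open ExactPaper CategoryTheory Limits

namespace ExactPaper.ExactStructure

section
variable {𝒜 : Type u} [Category.{v} 𝒜] [Abelian 𝒜] (E : ExactStructure 𝒜)

lemma aux_exists_section {S : ShortComplex 𝒜} (h : S.ShortExact) (r : S.X₂ ⟶ S.X₁)
    (hr : S.f ≫ r = 𝟙 _) : ∃ s : S.X₃ ⟶ S.X₂, s ≫ S.g = 𝟙 _ := by
  have := h.epi_g
  let σ := ShortComplex.Splitting.ofExactOfRetraction S h.exact r hr h.epi_g
  exact ⟨σ.s, σ.s_g⟩

lemma aux_lift {S : ShortComplex 𝒜} (h : S.ShortExact) {W : 𝒜} (k : W ⟶ S.X₂)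
    (hk : k ≫ S.g = 0) : ∃ l : W ⟶ S.X₁, l ≫ S.f = k := by
  have := h.mono_f
  exact ⟨h.exact.lift k hk, h.exact.lift_f k hk⟩

lemma aux_desc {S : ShortComplex 𝒜} (h : S.ShortExact) {W : 𝒜} (k : S.X₂ ⟶ W)
    (hk : S.f ≫ k = 0) : ∃ l : S.X₃ ⟶ W, S.g ≫ l = k := by
  have := h.epi_g
  exact ⟨h.exact.desc k hk, h.exact.g_desc k hk⟩

lemma aux_conf_of_admEpi {X Y Z : 𝒜} (f : X ⟶ Y) (g : Y ⟶ Z) (w : f ≫ g = 0)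
    (h : (ShortComplex.mk f g w).ShortExact) (hg : AdmEpi E.conflation g) :
    E.conflation (ShortComplex.mk f g w) := by
  obtain ⟨X', f', w', c⟩ := hg
  have h' := E.shortExact_of_conflation _ c
  let e : X' ≅ X := IsLimit.conePointUniqueUpToIso h'.fIsKernel h.fIsKernel
  have he : e.hom ≫ f = f' :=
    IsLimit.conePointUniqueUpToIso_hom_comp h'.fIsKernel h.fIsKernel WalkingParallelPair.zero
  refine E.conflation_of_iso _ _ ?_ c
  exact (ShortComplex.isoMk e (Iso.refl _) (Iso.refl _) (by simp [he]) (by simp))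

lemma aux_conf_of_admMono {X Y Z : 𝒜} (f : X ⟶ Y) (g : Y ⟶ Z) (w : f ≫ g = 0)
    (h : (ShortComplex.mk f g w).ShortExact) (hg : AdmMono E.conflation f) :
    E.conflation (ShortComplex.mk f g w) := by
  obtain ⟨Z', g', w', c⟩ := hg
  have h' := E.shortExact_of_conflation _ c
  let e : Z' ≅ Z := IsColimit.coconePointUniqueUpToIso h'.gIsCokernel h.gIsCokernel
  have he : g' ≫ e.hom = g :=
    IsColimit.comp_coconePointUniqueUpToIso_hom h'.gIsCokernel h.gIsCokernel
      WalkingParallelPair.one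
  refine E.conflation_of_iso _ _ ?_ c
  exact (ShortComplex.isoMk (Iso.refl _) (Iso.refl _) e (by simp) (by simp [he]))

lemma aux_pullback {X Y Z M : 𝒜} (f : X ⟶ Y) (g : Y ⟶ Z) (w : f ≫ g = 0)
    (c : E.conflation (ShortComplex.mk f g w)) (m : M ⟶ Z) :
    E.conflation (ShortComplex.mk (pullback.lift f 0 (by simp [w]) : X ⟶ pullback g m)
      (pullback.snd g m) (pullback.lift_snd _ _ _)) := by
  have h := E.shortExact_of_conflation _ c
  have : Mono f := h.mono_f
  have : Epi g := h.epi_g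
  have hm : Mono (pullback.lift f 0 (by simp [w]) : X ⟶ pullback g m) :=
    mono_of_mono_fac (pullback.lift_fst f 0 _)
  refine E.aux_conf_of_admEpi _ _ _ ?_ (E.admEpi_pullback g m ⟨_, _, _, c⟩)
  refine { exact := ?_, mono_f := hm, epi_g := inferInstance }
  refine ShortComplex.exact_of_f_is_kernel _ (KernelFork.IsLimit.ofι' _ _ ?_)
  intro W k hk
  have hk' : k ≫ pullback.snd g m = 0 := hk
  have hk2 : (k ≫ pullback.fst g m) ≫ g = 0 := by
    rw [Category.assoc, pullback.condition, ← Category.assoc, hk', zero_comp]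
  refine ⟨h.exact.lift (k ≫ pullback.fst g m) hk2, ?_⟩
  have h1 : h.exact.lift (k ≫ pullback.fst g m) hk2 ≫ f = k ≫ pullback.fst g m :=
    h.exact.lift_f _ _
  apply pullback.hom_ext
  · rw [Category.assoc]
    exact (congrArg _ (pullback.lift_fst _ _ _)).trans h1
  · rw [Category.assoc]
    exact (congrArg _ (pullback.lift_snd _ _ _)).trans (comp_zero.trans hk'.symm)

lemma aux_pushout {X Y Z M : 𝒜} (f : X ⟶ Y) (g : Y ⟶ Z) (w : f ≫ g = 0)
    (c : E.conflation (ShortComplex.mk f g w)) (m : X ⟶ M) :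
    E.conflation (ShortComplex.mk (pushout.inr f m)
      (pushout.desc g 0 (by simp [w]) : pushout f m ⟶ Z) (pushout.inr_desc _ _ _)) := by
  have h := E.shortExact_of_conflation _ c
  have : Mono f := h.mono_f
  have : Epi g := h.epi_g
  have hm : Epi (pushout.desc g 0 (by simp [w]) : pushout f m ⟶ Z) :=
    epi_of_epi_fac (pushout.inl_desc g 0 _)
  refine E.aux_conf_of_admMono _ _ _ ?_ (E.admMono_pushout f m ⟨_, _, _, c⟩)
  refine { exact := ?_, mono_f := inferInstance, epi_g := hm }
  refine ShortComplex.exact_of_g_is_cokernel _ (CokernelCofork.IsColimit.ofπ' _ _ ?_)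
  intro W k hk
  have hk' : pushout.inr f m ≫ k = 0 := hk
  have hk2 : f ≫ (pushout.inl f m ≫ k) = 0 := by
    rw [← Category.assoc, pushout.condition, Category.assoc, hk', comp_zero]
  refine ⟨h.exact.desc (pushout.inl f m ≫ k) hk2, ?_⟩
  have h1 : g ≫ h.exact.desc (pushout.inl f m ≫ k) hk2 = pushout.inl f m ≫ k :=
    h.exact.g_desc _ _
  apply pushout.hom_ext
  · rw [← Category.assoc]
    exact (congrArg (· ≫ _) (pushout.inl_desc _ _ _)).trans h1
  · rw [← Category.assoc]
    exact (congrArg (· ≫ _) (pushout.inr_desc _ _ _)).trans (zero_comp.trans hk'.symm)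

/-- An epimorphism through which an admissible epic factors is an admissible epic. -/
lemma aux_conf_of_factor {K P A X : 𝒜} (i : K ⟶ P) (q : P ⟶ A) (w : i ≫ q = 0)
    (c : E.conflation (ShortComplex.mk i q w)) (p : X ⟶ A) [Epi p] (h : P ⟶ X)
    (hp : h ≫ p = q) :
    E.conflation (ShortComplex.mk (kernel.ι p) p (kernel.condition p)) := by
  have hT : (ShortComplex.mk (kernel.ι p) p (kernel.condition p)).ShortExact :=
    { exact := ShortComplex.exact_kernel p
      mono_f := inferInstance
      epi_g := inferInstance }
  let m : K ⟶ kernel p := kernel.lift p (i ≫ h) (by rw [Category.assoc, hp, w])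
  have hm : m ≫ kernel.ι p = i ≫ h := kernel.lift_ι _ _ _
  have c2 := E.aux_pushout i q w c m
  let φ : ShortComplex.mk (pushout.inr i m)
      (pushout.desc q 0 (by simp [w]) : pushout i m ⟶ A) (pushout.inr_desc _ _ _) ⟶
      ShortComplex.mk (kernel.ι p) p (kernel.condition p) :=
    { τ₁ := 𝟙 _
      τ₂ := pushout.desc h (kernel.ι p) hm.symm
      τ₃ := 𝟙 _
      comm₁₂ := (Category.id_comp _).trans (pushout.inr_desc _ _ _).symm
      comm₂₃ := by
        apply pushout.hom_ext
        · dsimp only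
          rw [Category.comp_id, ← Category.assoc, pushout.inl_desc, pushout.inl_desc, hp]
        · dsimp only
          rw [Category.comp_id, ← Category.assoc, pushout.inr_desc, pushout.inr_desc,
            kernel.condition] }
  have : IsIso φ.τ₁ := inferInstanceAs (IsIso (𝟙 _))
  have : IsIso φ.τ₃ := inferInstanceAs (IsIso (𝟙 _))
  have : IsIso φ.τ₂ :=
    ShortComplex.isIso₂_of_shortExact_of_isIso₁₃ φ (E.shortExact_of_conflation _ c2) hT
  have : IsIso φ := ShortComplex.isIso_of_isIso φ
  exact E.conflation_of_iso _ _ (asIso φ) c2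

lemma aux_extend {X Y Z N : 𝒜} (f : X ⟶ Y) (g : Y ⟶ Z) (w : f ≫ g = 0)
    (c : E.conflation (ShortComplex.mk f g w)) (hE : E.Ext1Zero Z N) (m : X ⟶ N) :
    ∃ e : Y ⟶ N, f ≫ e = m := by
  obtain ⟨r, hr⟩ := hE _ _ _ _ (E.aux_pushout f g w c m)
  refine ⟨pushout.inl f m ≫ r, ?_⟩
  rw [← Category.assoc, pushout.condition, Category.assoc, hr, Category.comp_id]

lemma aux_lift_of_ext {X Y Z M : 𝒜} (f : X ⟶ Y) (g : Y ⟶ Z) (w : f ≫ g = 0)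
    (c : E.conflation (ShortComplex.mk f g w)) (hE : E.Ext1Zero M X) (m : M ⟶ Z) :
    ∃ e : M ⟶ Y, e ≫ g = m := by
  have c2 := E.aux_pullback f g w c m
  obtain ⟨r, hr⟩ := hE _ _ _ _ c2
  obtain ⟨s, hs⟩ := aux_exists_section (E.shortExact_of_conflation _ c2) r hr
  have hs' : s ≫ pullback.snd g m = 𝟙 _ := hs
  refine ⟨s ≫ pullback.fst g m, ?_⟩
  rw [Category.assoc, pullback.condition, ← Category.assoc, hs', Category.id_comp]

lemma aux_ext_of_proj {K P M N : 𝒜} (i : K ⟶ P) (q : P ⟶ M) (w : i ≫ q = 0)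
    (c : E.conflation (ShortComplex.mk i q w)) (hP : E.EProjective P)
    (H : ∀ m : K ⟶ N, ∃ e : P ⟶ N, i ≫ e = m) : E.Ext1Zero M N := by
  intro Z j p w' c'
  have h := E.shortExact_of_conflation _ c
  have h' := E.shortExact_of_conflation _ c'
  have : Mono j := h'.mono_f
  have : Epi q := h.epi_g
  obtain ⟨k, hk⟩ := hP _ c' q
  dsimp at k hk
  obtain ⟨l, hl⟩ := aux_lift h' (i ≫ k) (by simp [hk, w])
  dsimp at l hl
  obtain ⟨e, he⟩ := H l
  obtain ⟨s, hs⟩ := aux_desc h (k - e ≫ j) (by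
    simp [Preadditive.comp_sub, ← hl, ← he])
  dsimp at s hs
  have hsp : s ≫ p = 𝟙 _ := by
    rw [← cancel_epi q, ← Category.assoc, hs]
    simp [Preadditive.sub_comp, hk, w']
  obtain ⟨r, hr⟩ := aux_lift h' (𝟙 Z - p ≫ s) (by simp [Preadditive.sub_comp, hsp])
  dsimp at r hr
  refine ⟨r, ?_⟩
  rw [← cancel_mono j, Category.assoc, hr, Preadditive.comp_sub, ← Category.assoc, w']
  simp

end

end ExactPaper.ExactStructure

open ExactPaper CategoryTheory Limits in
/-- **Theorem 3.4, (1) ⇒ (2)**: if `𝒳` is `ℰ`-resolving, `𝒴 = 𝒳^⊥`, and every object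
admits an epimorphic `𝒳`-precover with kernel in `𝒴`, then `𝒴` is `ℰ`-coresolving,
`𝒳 = ^⊥𝒴`, and every object admits a monomorphic `𝒴`-preenvelope with cokernel in `𝒳`. -/
theorem coresolving_of_resolving
    {𝒜 : Type u} [Category.{v} 𝒜] [Abelian 𝒜]
    (E : ExactStructure 𝒜)
    (hproj : E.EnoughProjectives) (hinj : E.EnoughInjectives)
    (𝒳 𝒴 : Set 𝒜)
    (hXiso : ClosedUnderIsos 𝒳) (hXsum : ClosedUnderDirectSummands 𝒳)
    (hYiso : ClosedUnderIsos 𝒴) (hYsum : ClosedUnderDirectSummands 𝒴)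
    (hres : E.Resolving 𝒳) (hperp : 𝒴 = E.rightPerp 𝒳)
    (hcov : ∀ A : 𝒜, ∃ (X : 𝒜) (p : X ⟶ A),
      Epi p ∧ IsPrecover 𝒳 p ∧ kernel p ∈ 𝒴) :
    E.Coresolving 𝒴 ∧ 𝒳 = E.leftPerp 𝒴 ∧
      ∀ A : 𝒜, ∃ (Y : 𝒜) (j : A ⟶ Y), Mono j ∧ IsPreenvelope 𝒴 j ∧ cokernel j ∈ 𝒳 := by
  have hext : ∀ X ∈ 𝒳, ∀ Y ∈ 𝒴, E.Ext1Zero X Y := by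
    intro X hX Y hY
    rw [hperp] at hY
    exact hY X hX
  have hcov' : ∀ A : 𝒜, ∃ (X : 𝒜) (p : X ⟶ A), X ∈ 𝒳 ∧ kernel p ∈ 𝒴 ∧
      E.conflation (ShortComplex.mk (kernel.ι p) p (kernel.condition p)) := by
    intro A
    obtain ⟨X, p, hep, hpc, hk⟩ := hcov A
    obtain ⟨K, P, i, q, w, c, hP⟩ := hproj A
    obtain ⟨h, hh⟩ := hpc.2 P (hres.1 P hP) q
    exact ⟨X, p, hpc.1, hk, E.aux_conf_of_factor i q w c p h hh⟩
  have hYinj : ∀ I : 𝒜, E.EInjective I → I ∈ 𝒴 := by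
    intro I hI
    rw [hperp]
    intro X _ Z i p w c
    exact hI _ c (𝟙 I)
  have hYext : E.ClosedUnderExtensions 𝒴 := by
    rintro ⟨f, g, w⟩ c h1 h3
    dsimp at h1 h3 ⊢
    rw [hperp]
    intro X hX
    obtain ⟨K, P, i, q, w', c', hP⟩ := hproj X
    refine E.aux_ext_of_proj i q w' c' hP ?_
    intro m
    obtain ⟨e, he⟩ := E.aux_extend i q w' c' (hext X hX _ h3) (m ≫ g)
    obtain ⟨k, hk⟩ := hP _ c e
    dsimp at k hk
    obtain ⟨l, hl⟩ := ExactStructure.aux_lift (E.shortExact_of_conflation _ c)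
      (m - i ≫ k) (by simp [Preadditive.sub_comp, hk, he])
    dsimp at l hl
    obtain ⟨t, ht⟩ := E.aux_extend i q w' c' (hext X hX _ h1) l
    refine ⟨k + t ≫ f, ?_⟩
    rw [Preadditive.comp_add, ← Category.assoc, ht, hl]
    abel
  refine ⟨⟨hYinj, hYext, ?_⟩, ?_, ?_⟩
  · rintro ⟨f, g, w⟩ c h1 h2
    dsimp at h1 h2 ⊢
    rw [hperp]
    intro X hX
    obtain ⟨K, P, i, q, w', c', hP⟩ := hproj X
    have hK : K ∈ 𝒳 := hres.2.2 _ c' (hres.1 P hP) hX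
    refine E.aux_ext_of_proj i q w' c' hP ?_
    intro m
    obtain ⟨e, he⟩ := E.aux_lift_of_ext f g w c (hext K hK _ h1) m
    obtain ⟨t, ht⟩ := E.aux_extend i q w' c' (hext X hX _ h2) e
    exact ⟨t ≫ g, by rw [← Category.assoc, ht, he]⟩
  · apply Set.Subset.antisymm
    · intro X hX Y hY
      exact hext X hX Y hY
    · intro M hM
      obtain ⟨X, p, hX, hk, c⟩ := hcov' M
      obtain ⟨r, hr⟩ := hM _ hk _ _ _ _ c
      obtain ⟨s, hs⟩ :=
        ExactStructure.aux_exists_section (E.shortExact_of_conflation _ c) r hr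
      exact hXsum X M ⟨s, p, hs⟩ hX
  · intro A
    obtain ⟨I, C, i, q, w, c, hI⟩ := hinj A
    obtain ⟨X, p, hX, hk, cX⟩ := hcov' C
    have c1 := E.aux_pullback i q w c p
    have c2 := E.aux_pullback _ _ _ cX q
    have hD' : pullback p q ∈ 𝒴 := hYext _ c2 hk (hYinj I hI)
    have hD : pullback q p ∈ 𝒴 := hYiso _ _ (pullbackSymmetry p q) hD'
    have hs := E.shortExact_of_conflation _ c1
    refine ⟨pullback q p, pullback.lift i 0 (by simp [w]), hs.mono_f, ⟨hD, ?_⟩, ?_⟩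
    · intro Y' hY' g
      exact E.aux_extend _ _ _ c1 (hext X hX Y' hY') g
    · exact hXiso X _ (IsColimit.coconePointUniqueUpToIso hs.gIsCokernel
        (colimit.isColimit _)) hX
end

section
/- Let ℰ be an exact structure on an abelian category 𝒜 such that 𝒜 has enough ℰ-projectives and enough ℰ-injectives. If 𝒳 is an ℰ-resolving class of objects such that every object of 𝒜 admits an epimorphic 𝒳-cover, then every object A of 𝒜 admits a monomorphic 𝒳^⊥-preenvelope j : A → Y with Coker j ∈ 𝒳. -/
open CategoryTheory Category Limits

universe v u

namespace ExactPaper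

variable {𝒜 : Type u} [Category.{v} 𝒜] [Abelian 𝒜]

/-- The pullback of a conflation along an arbitrary morphism is a conflation. -/
lemma conflation_pullback (E : ExactStructure 𝒜) {A I C X : 𝒜} (i : A ⟶ I) (p : I ⟶ C)
    (w : i ≫ p = 0) (h : E.conflation (ShortComplex.mk i p w)) (f : X ⟶ C) :
    ∃ (j : A ⟶ pullback p f) (w' : j ≫ pullback.snd p f = 0),
      j ≫ pullback.fst p f = i ∧
        E.conflation (ShortComplex.mk j (pullback.snd p f) w') := by
  have hS := E.shortExact_of_conflation _ h
  obtain ⟨A', j', w'', h'⟩ := E.admEpi_pullback p f ⟨A, i, w, h⟩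
  have hS' := E.shortExact_of_conflation _ h'
  have : Mono i := hS.mono_f
  have : Mono j' := hS'.mono_f
  obtain ⟨j, hj1, hj2⟩ : ∃ j : A ⟶ pullback p f,
      j ≫ pullback.fst p f = i ∧ j ≫ pullback.snd p f = 0 :=
    ⟨pullback.lift i 0 (by simp [w]), pullback.lift_fst _ _ _, pullback.lift_snd _ _ _⟩
  refine ⟨j, hj2, hj1, ?_⟩
  obtain ⟨a, ha⟩ : ∃ a : A ⟶ A', a ≫ j' = j := ⟨hS'.exact.lift j hj2, hS'.exact.lift_f _ _⟩
  have hw : (j' ≫ pullback.fst p f) ≫ p = 0 := by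
    rw [assoc, pullback.condition, ← assoc, w'', zero_comp]
  obtain ⟨b, hb⟩ : ∃ b : A' ⟶ A, b ≫ i = j' ≫ pullback.fst p f :=
    ⟨hS.exact.lift _ hw, hS.exact.lift_f _ _⟩
  have hbj : b ≫ j = j' := by
    apply pullback.hom_ext
    · rw [assoc, hj1, hb]
    · rw [assoc, hj2, comp_zero, w'']
  have hab : a ≫ b = 𝟙 _ := by
    rw [← cancel_mono i, assoc, hb, ← assoc, ha, hj1, id_comp]
  have hba : b ≫ a = 𝟙 _ := by
    rw [← cancel_mono j', assoc, ha, hbj, id_comp]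
  let e : A' ≅ A := ⟨b, a, hba, hab⟩
  refine E.conflation_of_iso (ShortComplex.mk j' (pullback.snd p f) w'') _
    (ShortComplex.isoMk e (Iso.refl _) (Iso.refl _)
    ?_ ?_) h'
  · simp [e, hbj]
  · simp

/-- The pushout of a conflation along an arbitrary morphism is a conflation. -/
lemma conflation_pushout (E : ExactStructure 𝒜) {A Y X B : 𝒜} (i : A ⟶ Y) (p : Y ⟶ X)
    (w : i ≫ p = 0) (h : E.conflation (ShortComplex.mk i p w)) (f : A ⟶ B) :
    ∃ (q : pushout i f ⟶ X) (w' : pushout.inr i f ≫ q = 0),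
        E.conflation (ShortComplex.mk (pushout.inr i f) q w') := by
  have hS := E.shortExact_of_conflation _ h
  obtain ⟨X', q', w'', h'⟩ := E.admMono_pushout i f ⟨X, p, w, h⟩
  have hS' := E.shortExact_of_conflation _ h'
  have : Epi p := hS.epi_g
  have : Epi q' := hS'.epi_g
  obtain ⟨q, hq1, hq2⟩ : ∃ q : pushout i f ⟶ X,
      pushout.inl i f ≫ q = p ∧ pushout.inr i f ≫ q = 0 :=
    ⟨pushout.desc p 0 (by simp [w]), pushout.inl_desc _ _ _, pushout.inr_desc _ _ _⟩
  refine ⟨q, hq2, ?_⟩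
  obtain ⟨a, ha⟩ : ∃ a : X' ⟶ X, q' ≫ a = q := ⟨hS'.exact.desc q hq2, hS'.exact.g_desc _ _⟩
  have hw : i ≫ (pushout.inl i f ≫ q') = 0 := by
    rw [← assoc, pushout.condition, assoc, w'', comp_zero]
  obtain ⟨b, hb⟩ : ∃ b : X ⟶ X', p ≫ b = pushout.inl i f ≫ q' :=
    ⟨hS.exact.desc _ hw, hS.exact.g_desc _ _⟩
  have hbj : q ≫ b = q' := by
    apply pushout.hom_ext
    · rw [← assoc, hq1, hb]
    · rw [← assoc, hq2, zero_comp, w'']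
  have hba : b ≫ a = 𝟙 _ := by
    rw [← cancel_epi p, ← assoc, hb, assoc, ha, hq1, comp_id]
  have hab : a ≫ b = 𝟙 _ := by
    rw [← cancel_epi q', ← assoc, ha, hbj, comp_id]
  let e : X' ≅ X := ⟨a, b, hab, hba⟩
  refine E.conflation_of_iso (ShortComplex.mk (pushout.inr i f) q' w'') _
    (ShortComplex.isoMk (Iso.refl _) (Iso.refl _) e
    ?_ ?_) h'
  · simp
  · simp [e, ha]

open scoped ZeroObject in
/-- A resolving class is closed under isomorphisms. -/
lemma resolving_iso (E : ExactStructure 𝒜) (𝒳 : Set 𝒜) (hres : E.Resolving 𝒳) {X Y : 𝒜}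
    (e : X ≅ Y) (hX : X ∈ 𝒳) : Y ∈ 𝒳 := by
  have h0 : (0 : 𝒜) ∈ 𝒳 := hres.1 _ (fun S _ h => ⟨0, (isZero_zero 𝒜).eq_of_src _ _⟩)
  refine hres.2.1 (ShortComplex.mk e.hom (0 : Y ⟶ 0) (by simp)) ?_ hX h0
  refine E.conflation_of_splitting _ ⟨e.inv, 0, ?_, ?_, ?_⟩
  · simp
  · exact (isZero_zero 𝒜).eq_of_src _ _
  · simp

end ExactPaper

open ExactPaper CategoryTheory Limits in
/-- **Corollary 3.5(1)**: if `𝒳` is an `ℰ`-resolving class such that every object admits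
an epimorphic `𝒳`-cover, then every object `A` admits a monomorphic `𝒳^⊥`-preenvelope
`j : A ⟶ Y` with `Coker j ∈ 𝒳`. -/
theorem preenvelope_of_epiCovering_resolving
    {𝒜 : Type u} [Category.{v} 𝒜] [Abelian 𝒜]
    (E : ExactStructure 𝒜)
    (hproj : E.EnoughProjectives) (hinj : E.EnoughInjectives)
    (𝒳 : Set 𝒜) (hres : E.Resolving 𝒳)
    (hcov : ∀ A : 𝒜, ∃ (X : 𝒜) (f : X ⟶ A), Epi f ∧ IsCover 𝒳 f) :
    ∀ A : 𝒜, ∃ (Y : 𝒜) (j : A ⟶ Y),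
      Mono j ∧ IsPreenvelope (E.rightPerp 𝒳) j ∧ cokernel j ∈ 𝒳 := by
  intro A
  obtain ⟨I, C, i, p, w, hc, hI⟩ := hinj A
  obtain ⟨X, f, -, ⟨hX, hpre⟩, hcover⟩ := hcov C
  obtain ⟨j, wj, hj, hjc⟩ := conflation_pullback E i p w hc f
  have hS := E.shortExact_of_conflation _ hjc
  refine ⟨pullback p f, j, hS.mono_f, ⟨?_, ?_⟩, ?_⟩
  · intro X' hX' Z k q wk hk
    obtain ⟨s, hs⟩ := hI _ hk (pullback.fst p f)
    dsimp at s hs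
    obtain ⟨q', w', hW⟩ := conflation_pushout E k q wk hk (pullback.snd p f)
    have hWX : pushout k (pullback.snd p f) ∈ 𝒳 := hres.2.1 _ hW hX hX'
    obtain ⟨m, hm1, hm2⟩ : ∃ m : pushout k (pullback.snd p f) ⟶ C,
        pushout.inl _ _ ≫ m = s ≫ p ∧ pushout.inr _ _ ≫ m = f :=
      ⟨pushout.desc (s ≫ p) f (by rw [← assoc, hs, pullback.condition]),
        pushout.inl_desc _ _ _, pushout.inr_desc _ _ _⟩
    obtain ⟨l, hl⟩ := hpre _ hWX m
    have hu : (pushout.inr k (pullback.snd p f) ≫ l) ≫ f = f := by rw [assoc, hl, hm2]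
    have hiso := hcover _ hu
    let t := pushout.inl k (pullback.snd p f) ≫ l ≫ inv (pushout.inr k (pullback.snd p f) ≫ l)
    have ht : s ≫ p = t ≫ f := by
      have : inv (pushout.inr k (pullback.snd p f) ≫ l) ≫ f = f := by
        rw [IsIso.inv_comp_eq, hu]
      simp only [t, assoc]
      rw [this, hl, hm1]
    refine ⟨pullback.lift s t ht, ?_⟩
    apply pullback.hom_ext
    · rw [assoc, pullback.lift_fst, id_comp, hs]
    · rw [assoc, pullback.lift_snd, id_comp]
      simp only [t]
      rw [← assoc, pushout.condition, assoc, ← assoc _ l, IsIso.hom_inv_id, comp_id]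
  · intro Y' hY' g
    obtain ⟨q, w', hW⟩ := conflation_pushout E j _ wj hjc g
    obtain ⟨r, hr⟩ := hY' X hX _ _ _ _ hW
    exact ⟨pushout.inl j g ≫ r, by rw [← assoc, pushout.condition, assoc, hr, comp_id]⟩
  · refine resolving_iso E 𝒳 hres ?_ hX
    exact hS.gIsCokernel.coconePointUniqueUpToIso (colimit.isColimit (parallelPair j 0))
end

section
/- Let ℰ be an exact structure on an abelian category 𝒜 such that 𝒜 has enough ℰ-projectives and enough ℰ-injectives. If 𝒴 is an ℰ-coresolving class of objects such that every object of 𝒜 admits a monomorphic 𝒴-envelope, then every object A of 𝒜 admits an epimorphic ^⊥𝒴-precover p : X → A with Ker p ∈ 𝒴. -/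
open CategoryTheory Category Limits

universe v u

namespace ExactPaper.ExactStructure

variable {𝒜 : Type u} [Category.{v} 𝒜] [Abelian 𝒜] (E : ExactStructure 𝒜)

open ZeroObject in
lemma mem_of_iso {𝒴 : Set 𝒜} (hc : E.Coresolving 𝒴) {A B : 𝒜} (e : A ≅ B) (hA : A ∈ 𝒴) :
    B ∈ 𝒴 := by
  have h0 : (0 : 𝒜) ∈ 𝒴 := hc.1 _ fun S _ h => ⟨0, (isZero_zero 𝒜).eq_of_tgt _ _⟩
  have w : e.hom ≫ (0 : B ⟶ 0) = 0 := by simp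
  refine hc.2.1 (ShortComplex.mk e.hom (0 : B ⟶ 0) w) ?_ hA h0
  exact E.conflation_of_splitting _
    { r := e.inv, s := 0, f_r := by simp, s_g := (isZero_zero 𝒜).eq_of_tgt _ _, id := by simp }

lemma kernel_mem {𝒴 : Set 𝒜} (hc : E.Coresolving 𝒴) (S : ShortComplex 𝒜)
    (hS : E.conflation S) (h1 : S.X₁ ∈ 𝒴) : kernel S.g ∈ 𝒴 := by
  have h := E.shortExact_of_conflation S hS
  exact E.mem_of_iso hc (IsLimit.conePointUniqueUpToIso h.fIsKernel (limit.isLimit _)) h1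

/-- Pullbacks of conflations with kernel in `𝒴`. -/
lemma pullback_conf {𝒴 : Set 𝒜} (hc : E.Coresolving 𝒴) (S : ShortComplex 𝒜)
    (hS : E.conflation S) (h1 : S.X₁ ∈ 𝒴) {M : 𝒜} (g : M ⟶ S.X₃) :
    ∃ (N : 𝒜) (i : N ⟶ pullback S.g g) (w : i ≫ pullback.snd S.g g = 0),
      E.conflation (ShortComplex.mk i (pullback.snd S.g g) w) ∧ N ∈ 𝒴 := by
  obtain ⟨N, i, w, hi⟩ := E.admEpi_pullback S.g g ⟨_, S.f, S.zero, hS⟩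
  refine ⟨N, i, w, hi, ?_⟩
  have h := E.shortExact_of_conflation _ hi
  have e1 : N ≅ kernel (pullback.snd S.g g) :=
    IsLimit.conePointUniqueUpToIso h.fIsKernel (limit.isLimit _)
  have e2 : kernel (pullback.snd S.g g) ≅ kernel S.g :=
    have := isIso_kernel_map_of_isPullback (IsPullback.of_hasPullback S.g g).flip
    asIso (kernel.map _ _ _ _ (IsPullback.of_hasPullback S.g g).flip.w)
  exact E.mem_of_iso hc (e1 ≪≫ e2).symm (E.kernel_mem hc S hS h1)

lemma lift_of_leftPerp {𝒴 : Set 𝒜} (hc : E.Coresolving 𝒴) (S : ShortComplex 𝒜)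
    (hS : E.conflation S) (h1 : S.X₁ ∈ 𝒴) {M : 𝒜} (hM : M ∈ E.leftPerp 𝒴) (g : M ⟶ S.X₃) :
    ∃ h : M ⟶ S.X₂, h ≫ S.g = g := by
  obtain ⟨N, i, w, hi, hN⟩ := E.pullback_conf hc S hS h1 g
  obtain ⟨r, hr⟩ := hM N hN _ i _ w hi
  have hex := E.shortExact_of_conflation _ hi
  have := hex.mono_f
  have := hex.epi_g
  let σ := ShortComplex.Splitting.ofExactOfRetraction _ hex.exact r hr hex.epi_g
  refine ⟨σ.s ≫ pullback.fst S.g g, ?_⟩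
  have h2 : σ.s ≫ pullback.snd S.g g = 𝟙 M := σ.s_g
  rw [Category.assoc, pullback.condition, ← Category.assoc, h2, Category.id_comp]

/-- Given a conflation `K → P → A` with `P` projective and a `𝒴`-envelope `f : K → Y`, the
pushout lies in `^⊥𝒴`. -/
lemma pushout_mem {𝒴 : Set 𝒜} (hc : E.Coresolving 𝒴) {K P Y : 𝒜} (i : K ⟶ P) (f : K ⟶ Y)
    (hP : E.EProjective P) (hf : IsEnvelope 𝒴 f) : pushout i f ∈ E.leftPerp 𝒴 := by
  intro Y' hY' Z j q w hq
  obtain ⟨t, ht⟩ := hP _ hq (pushout.inl i f)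
  dsimp at t ht
  obtain ⟨N, n, wn, hn, hN⟩ := E.pullback_conf hc _ hq hY' (pushout.inr i f)
  dsimp at n wn hn
  have hW := hc.2.1 _ hn hN hf.1.1
  dsimp at hW
  let a : K ⟶ pullback q (pushout.inr i f) :=
    pullback.lift (i ≫ t) f (by rw [Category.assoc, ht, pushout.condition])
  obtain ⟨h, hh⟩ := hf.1.2 _ hW a
  have hu : f ≫ h ≫ pullback.snd q (pushout.inr i f) = f := by
    rw [← Category.assoc, hh]; exact pullback.lift_snd _ _ _
  have hiso := hf.2 _ hu
  let u := h ≫ pullback.snd q (pushout.inr i f)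
  have hu' : f ≫ inv u = f := by
    rw [IsIso.comp_inv_eq]; exact hu.symm
  let s : pushout i f ⟶ Z := pushout.desc t (inv u ≫ h ≫ pullback.fst q (pushout.inr i f)) (by
    rw [reassoc_of% hu', reassoc_of% hh]; exact (pullback.lift_fst _ _ _).symm)
  have hs : s ≫ q = 𝟙 _ := by
    apply pushout.hom_ext
    · simp [s, ht, pushout.inl_desc_assoc]
    · simp only [s, Category.comp_id, pushout.inr_desc_assoc, Category.assoc, pullback.condition]
      rw [← Category.assoc h]
      exact IsIso.inv_hom_id_assoc u _
  have hex := E.shortExact_of_conflation _ hq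
  let σ := ShortComplex.Splitting.ofExactOfSection _ hex.exact s hs hex.mono_f
  exact ⟨σ.r, σ.f_r⟩

/-- Pushouts of conflations, with the third term kept. -/
lemma pushout_conf {K P A Y : 𝒜} (i : K ⟶ P) (p : P ⟶ A) (w : i ≫ p = 0)
    (hc : E.conflation (ShortComplex.mk i p w)) (f : K ⟶ Y) :
    ∃ (q : pushout i f ⟶ A) (wq : pushout.inr i f ≫ q = 0),
      E.conflation (ShortComplex.mk (pushout.inr i f) q wq) := by
  obtain ⟨Z, g, wg, hg⟩ := E.admMono_pushout i f ⟨_, p, w, hc⟩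
  have h1 := E.shortExact_of_conflation _ hc
  have h2 := E.shortExact_of_conflation _ hg
  have ep : Epi p := h1.epi_g
  have eg : Epi g := h2.epi_g
  let q : pushout i f ⟶ A := pushout.desc p 0 (by simp [w])
  have wq : pushout.inr i f ≫ q = 0 := by simp [q, pushout.inr_desc]
  obtain ⟨φ, hφ⟩ := CokernelCofork.IsColimit.desc' h2.gIsCokernel q wq
  obtain ⟨ψ, hψ⟩ := CokernelCofork.IsColimit.desc' h1.gIsCokernel (pushout.inl i f ≫ g)
    (by simp [pushout.condition_assoc, wg])
  change g ≫ φ = q at hφ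
  change p ≫ ψ = _ at hψ
  let e : Z ≅ A :=
    { hom := φ
      inv := ψ
      hom_inv_id := by
        rw [← cancel_epi g, reassoc_of% hφ]
        apply pushout.hom_ext
        · simp [q, hψ, pushout.inl_desc_assoc]
        · simp [q, wg, pushout.inr_desc_assoc]
      inv_hom_id := by
        rw [← cancel_epi p, reassoc_of% hψ, hφ]
        simp [q, pushout.inl_desc] }
  refine ⟨q, wq, E.conflation_of_iso _ _ ?_ hg⟩
  exact ShortComplex.isoMk (Iso.refl _) (Iso.refl _) e (by simp) (by simp [e, hφ])

end ExactPaper.ExactStructure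

open ExactPaper CategoryTheory Limits in
/-- **Corollary 3.5(2)**: if `𝒴` is an `ℰ`-coresolving class such that every object admits
a monomorphic `𝒴`-envelope, then every object `A` admits an epimorphic `^⊥𝒴`-precover
`p : X ⟶ A` with `Ker p ∈ 𝒴`. -/
theorem precover_of_monoEnveloping_coresolving
    {𝒜 : Type u} [Category.{v} 𝒜] [Abelian 𝒜]
    (E : ExactStructure 𝒜)
    (hproj : E.EnoughProjectives) (hinj : E.EnoughInjectives)
    (𝒴 : Set 𝒜) (hcores : E.Coresolving 𝒴)
    (henv : ∀ A : 𝒜, ∃ (Y : 𝒜) (f : A ⟶ Y), Mono f ∧ IsEnvelope 𝒴 f) :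
    ∀ A : 𝒜, ∃ (X : 𝒜) (p : X ⟶ A),
      Epi p ∧ IsPrecover (E.leftPerp 𝒴) p ∧ kernel p ∈ 𝒴 := by
  intro A
  obtain ⟨K, P, i, p, w, hc, hP⟩ := hproj A
  obtain ⟨Y, f, -, hf⟩ := henv K
  obtain ⟨q, wq, hq⟩ := E.pushout_conf i p w hc f
  refine ⟨pushout i f, q, (E.shortExact_of_conflation _ hq).epi_g,
    ⟨E.pushout_mem hcores i f hP hf, fun X' hX' g => ?_⟩, E.kernel_mem hcores _ hq hf.1.1⟩
  exact E.lift_of_leftPerp hcores _ hq hf.1.1 hX' g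
end

section
/- Let ℰ be an exact structure on an abelian category 𝒜 such that 𝒜 has enough ℰ-projectives and enough ℰ-injectives, and let (𝒳,𝒴) be a complete hereditary classical cotorsion pair in 𝒜. If 𝒳 contains all ℰ-projective objects of 𝒜, then (𝒳, 𝒳^⊥ℰ) is a complete hereditary ℰ-cotorsion pair and every object A of 𝒜 admits a monomorphic 𝒳^⊥ℰ-preenvelope j : A → Y with Coker j ∈ 𝒳. -/
open CategoryTheory Category Limits

universe v u

namespace ExactPaper

open CategoryTheory Limits

variable {𝒜 : Type u} [Category.{v} 𝒜] [Abelian 𝒜]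

/-- Classical `Ext¹_𝒜(M,N) = 0`: every short exact sequence `0 → N → Z → M → 0` splits. -/
def Ext1ZeroClassical (M N : 𝒜) : Prop :=
  ∀ (Z : 𝒜) (i : N ⟶ Z) (p : Z ⟶ M) (w : i ≫ p = 0),
    (ShortComplex.mk i p w).ShortExact → ∃ r : Z ⟶ N, i ≫ r = 𝟙 N

/-- The classical right orthogonal class `𝒳^⊥₁`. -/
def rightPerp1 (𝒳 : Set 𝒜) : Set 𝒜 := {N | ∀ X ∈ 𝒳, Ext1ZeroClassical X N}

/-- The classical left orthogonal class `^⊥₁𝒴`. -/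
def leftPerp1 (𝒴 : Set 𝒜) : Set 𝒜 := {M | ∀ Y ∈ 𝒴, Ext1ZeroClassical M Y}

/-- `(𝒳,𝒴)` is a complete hereditary classical cotorsion pair in `𝒜`. -/
def CompleteHereditaryClassicalCotorsionPair (𝒳 𝒴 : Set 𝒜) : Prop :=
  𝒳 = leftPerp1 𝒴 ∧ 𝒴 = rightPerp1 𝒳 ∧
  (∀ A : 𝒜, ∃ (Y X : 𝒜) (i : Y ⟶ X) (p : X ⟶ A) (w : i ≫ p = 0),
      (ShortComplex.mk i p w).ShortExact ∧ X ∈ 𝒳 ∧ Y ∈ 𝒴) ∧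
  (∀ A : 𝒜, ∃ (Y' X' : 𝒜) (i : A ⟶ Y') (p : Y' ⟶ X') (w : i ≫ p = 0),
      (ShortComplex.mk i p w).ShortExact ∧ X' ∈ 𝒳 ∧ Y' ∈ 𝒴) ∧
  (∀ (S : ShortComplex 𝒜), S.ShortExact → S.X₂ ∈ 𝒳 → S.X₃ ∈ 𝒳 → S.X₁ ∈ 𝒳)

end ExactPaper


namespace ExactPaper

open CategoryTheory Limits

variable {𝒜 : Type u} [Category.{v} 𝒜] [Abelian 𝒜]

/-- A short exact sequence whose first map is an admissible monic is a conflation. -/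
lemma conf_of_admMono (E : ExactStructure 𝒜) {S : ShortComplex 𝒜} (hS : S.ShortExact)
    (h : AdmMono E.conflation S.f) : E.conflation S := by
  obtain ⟨Z, g, w, hc⟩ := h
  have hT := E.shortExact_of_conflation _ hc
  have := hS.epi_g
  have := hT.epi_g
  let e : Z ≅ S.X₃ := hT.gIsCokernel.coconePointUniqueUpToIso hS.gIsCokernel
  have he : g ≫ e.hom = S.g :=
    hT.gIsCokernel.comp_coconePointUniqueUpToIso_hom hS.gIsCokernel WalkingParallelPair.one
  refine E.conflation_of_iso (ShortComplex.mk S.f g w) S (ShortComplex.isoMk (Iso.refl _) (Iso.refl _) e ?_ ?_) hc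
  · simp
  · simp [he]

/-- A short exact sequence whose second map is an admissible epic is a conflation. -/
lemma conf_of_admEpi (E : ExactStructure 𝒜) {S : ShortComplex 𝒜} (hS : S.ShortExact)
    (h : AdmEpi E.conflation S.g) : E.conflation S := by
  obtain ⟨Z, f, w, hc⟩ := h
  have hT := E.shortExact_of_conflation _ hc
  have := hS.mono_f
  have := hT.mono_f
  let e : Z ≅ S.X₁ := hT.fIsKernel.conePointUniqueUpToIso hS.fIsKernel
  have he : e.hom ≫ S.f = f :=
    hT.fIsKernel.conePointUniqueUpToIso_hom_comp hS.fIsKernel WalkingParallelPair.zero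
  refine E.conflation_of_iso (ShortComplex.mk f S.g w) S (ShortComplex.isoMk e (Iso.refl _) (Iso.refl _) ?_ ?_) hc
  · simp [he]
  · simp

lemma pushout_conf (E : ExactStructure 𝒜) {K P X N : 𝒜} {i : K ⟶ P} {p : P ⟶ X} {w : i ≫ p = 0}
    (h : E.conflation (ShortComplex.mk i p w)) (f : K ⟶ N) :
    ∃ (d : pushout i f ⟶ X) (w' : pushout.inr i f ≫ d = 0),
      E.conflation (ShortComplex.mk (pushout.inr i f) d w') ∧ pushout.inl i f ≫ d = p := by
  have hS := E.shortExact_of_conflation _ h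
  have hm : Mono i := hS.mono_f
  have hp : Epi p := hS.epi_g
  let d : pushout i f ⟶ X := pushout.desc p 0 (by simp [w])
  have h1 : pushout.inl i f ≫ d = p := pushout.inl_desc _ _ _
  have h2 : pushout.inr i f ≫ d = 0 := pushout.inr_desc _ _ _
  have hd : Epi d := by
    have : Epi (pushout.inl i f ≫ d) := by rw [h1]; exact hp
    exact epi_of_epi (pushout.inl i f) d
  refine ⟨d, h2, ?_, h1⟩
  apply conf_of_admMono
  · have hex : (ShortComplex.mk (pushout.inr i f) d h2).Exact := by
      apply ShortComplex.exact_of_g_is_cokernel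
      refine CokernelCofork.IsColimit.ofπ' _ _ (fun {W} k hk => ?_)
      have hk' : i ≫ pushout.inl i f ≫ k = 0 := by
        rw [pushout.condition_assoc]; simp at hk; simp [hk]
      refine ⟨hS.gIsCokernel.desc (CokernelCofork.ofπ (pushout.inl i f ≫ k) hk'), ?_⟩
      have h3 : p ≫ hS.gIsCokernel.desc (CokernelCofork.ofπ (pushout.inl i f ≫ k) hk')
        = pushout.inl i f ≫ k := hS.gIsCokernel.fac _ WalkingParallelPair.one
      apply pushout.hom_ext
      · simp only [← Category.assoc]
        erw [h1]
        simpa using h3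
      · simp only [← Category.assoc]
        erw [h2]
        simpa using hk.symm
    exact { exact := hex, mono_f := by dsimp; infer_instance, epi_g := hd }
  · exact E.admMono_pushout i f ⟨_, _, _, h⟩

lemma pullback_conf (E : ExactStructure 𝒜) {N I C M : 𝒜} {i : N ⟶ I} {p : I ⟶ C} {w : i ≫ p = 0}
    (h : E.conflation (ShortComplex.mk i p w)) (f : M ⟶ C) :
    ∃ (d : N ⟶ pullback p f) (w' : d ≫ pullback.snd p f = 0),
      E.conflation (ShortComplex.mk d (pullback.snd p f) w') ∧ d ≫ pullback.fst p f = i := by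
  have hS := E.shortExact_of_conflation _ h
  have hm : Mono i := hS.mono_f
  have hp : Epi p := hS.epi_g
  let d : N ⟶ pullback p f := pullback.lift i 0 (by simp [w])
  have h1 : d ≫ pullback.fst p f = i := pullback.lift_fst _ _ _
  have h2 : d ≫ pullback.snd p f = 0 := pullback.lift_snd _ _ _
  have hd : Mono d := by
    have : Mono (d ≫ pullback.fst p f) := by rw [h1]; exact hm
    exact mono_of_mono d (pullback.fst p f)
  refine ⟨d, h2, ?_, h1⟩
  apply conf_of_admEpi
  · have hex : (ShortComplex.mk d (pullback.snd p f) h2).Exact := by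
      apply ShortComplex.exact_of_f_is_kernel
      refine KernelFork.IsLimit.ofι' _ _ (fun {W} k hk => ?_)
      have hk' : (k ≫ pullback.fst p f) ≫ p = 0 := by
        rw [Category.assoc, pullback.condition, ← Category.assoc]; simp at hk; simp [hk]
      refine ⟨hS.fIsKernel.lift (KernelFork.ofι (k ≫ pullback.fst p f) hk'), ?_⟩
      have h3 : hS.fIsKernel.lift (KernelFork.ofι (k ≫ pullback.fst p f) hk') ≫ i
        = k ≫ pullback.fst p f := hS.fIsKernel.fac _ WalkingParallelPair.zero
      apply pullback.hom_ext
      · rw [Category.assoc]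
        erw [h1]
        simpa using h3
      · rw [Category.assoc]
        erw [h2]
        simpa using hk.symm
    exact { exact := hex, mono_f := hd, epi_g := by dsimp; infer_instance }
  · exact E.admEpi_pullback p f ⟨_, _, _, h⟩

lemma exists_extend (E : ExactStructure 𝒜) {K P X N : 𝒜} {i : K ⟶ P} {p : P ⟶ X} {w : i ≫ p = 0}
    (h : E.conflation (ShortComplex.mk i p w)) (hN : E.Ext1Zero X N) (f : K ⟶ N) :
    ∃ g : P ⟶ N, i ≫ g = f := by
  obtain ⟨d, w', hc, -⟩ := pushout_conf E h f
  obtain ⟨r, hr⟩ := hN _ _ _ _ hc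
  exact ⟨pushout.inl i f ≫ r, by rw [pushout.condition_assoc, hr, Category.comp_id]⟩

lemma exists_section {N Z M : 𝒜} {i : N ⟶ Z} {p : Z ⟶ M} {w : i ≫ p = 0}
    (h : (ShortComplex.mk i p w).ShortExact) {r : Z ⟶ N} (hr : i ≫ r = 𝟙 N) :
    ∃ s : M ⟶ Z, s ≫ p = 𝟙 M := by
  have := h.epi_g
  exact ⟨_, (ShortComplex.Splitting.ofExactOfRetraction _ h.exact r hr this).s_g⟩

lemma exists_retraction {N Z M : 𝒜} {i : N ⟶ Z} {p : Z ⟶ M} {w : i ≫ p = 0}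
    (h : (ShortComplex.mk i p w).ShortExact) {s : M ⟶ Z} (hs : s ≫ p = 𝟙 M) :
    ∃ r : Z ⟶ N, i ≫ r = 𝟙 N := by
  have := h.mono_f
  exact ⟨_, (ShortComplex.Splitting.ofExactOfSection _ h.exact s hs this).f_r⟩

lemma exists_lift (E : ExactStructure 𝒜) {N I C M : 𝒜} {i : N ⟶ I} {p : I ⟶ C} {w : i ≫ p = 0}
    (h : E.conflation (ShortComplex.mk i p w)) (hN : E.Ext1Zero M N) (f : M ⟶ C) :
    ∃ g : M ⟶ I, g ≫ p = f := by
  obtain ⟨d, w', hc, -⟩ := pullback_conf E h f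
  obtain ⟨r, hr⟩ := hN _ _ _ _ hc
  obtain ⟨s, hs⟩ := exists_section (E.shortExact_of_conflation _ hc) hr
  exact ⟨s ≫ pullback.fst p f, by
    rw [Category.assoc, pullback.condition, ← Category.assoc, hs, Category.id_comp]⟩

lemma ses_desc {N Z M W : 𝒜} {i : N ⟶ Z} {p : Z ⟶ M} {w : i ≫ p = 0}
    (h : (ShortComplex.mk i p w).ShortExact) (k : Z ⟶ W) (hk : i ≫ k = 0) :
    ∃ l : M ⟶ W, p ≫ l = k := by
  have := h.epi_g
  exact ⟨_, h.gIsCokernel.fac (CokernelCofork.ofπ k hk) WalkingParallelPair.one⟩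

lemma ses_lift {N Z M W : 𝒜} {i : N ⟶ Z} {p : Z ⟶ M} {w : i ≫ p = 0}
    (h : (ShortComplex.mk i p w).ShortExact) (k : W ⟶ Z) (hk : k ≫ p = 0) :
    ∃ l : W ⟶ N, l ≫ i = k := by
  have := h.mono_f
  exact ⟨_, h.fIsKernel.fac (KernelFork.ofι k hk) WalkingParallelPair.zero⟩

lemma ext_of_extend (E : ExactStructure 𝒜) {K P X N : 𝒜} {i : K ⟶ P} {p : P ⟶ X} {w : i ≫ p = 0}
    (h : E.conflation (ShortComplex.mk i p w)) (hP : E.EProjective P)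
    (H : ∀ f : K ⟶ N, ∃ g : P ⟶ N, i ≫ g = f) : E.Ext1Zero X N := by
  intro Z j q w' hc
  have hS := E.shortExact_of_conflation _ h
  have hT := E.shortExact_of_conflation _ hc
  have hp : Epi p := hS.epi_g
  obtain ⟨k, hk⟩ := hP _ hc p
  dsimp at k hk
  obtain ⟨f, hf⟩ := ses_lift hT (i ≫ k) (by rw [Category.assoc, hk, w])
  obtain ⟨g, hg⟩ := H f
  obtain ⟨s, hs⟩ := ses_desc hS (k - g ≫ j) (by
    rw [Preadditive.comp_sub, ← Category.assoc, hg, hf, sub_self])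
  refine exists_retraction hT (s := s) ?_
  rw [← cancel_epi p, ← Category.assoc, hs, Preadditive.sub_comp, Category.assoc, w', hk]
  simp

lemma ext_of_lift (E : ExactStructure 𝒜) {N I C M : 𝒜} {i : N ⟶ I} {p : I ⟶ C} {w : i ≫ p = 0}
    (h : E.conflation (ShortComplex.mk i p w)) (hI : E.EInjective I)
    (H : ∀ f : M ⟶ C, ∃ g : M ⟶ I, g ≫ p = f) : E.Ext1Zero M N := by
  intro Z j q w' hc
  have hS := E.shortExact_of_conflation _ h
  have hT := E.shortExact_of_conflation _ hc
  have hp : Mono i := hS.mono_f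
  obtain ⟨k, hk⟩ := hI _ hc i
  dsimp at k hk
  obtain ⟨f, hf⟩ := ses_desc hT (k ≫ p) (by rw [← Category.assoc, hk, w])
  obtain ⟨g, hg⟩ := H f
  obtain ⟨s, hs⟩ := ses_lift hS (k - q ≫ g) (by
    rw [Preadditive.sub_comp, Category.assoc, hg, hf, sub_self])
  refine ⟨s, ?_⟩
  rw [← cancel_mono i, Category.assoc, hs, Preadditive.comp_sub, ← Category.assoc, w', hk]
  simp

lemma ext_right_ext (E : ExactStructure 𝒜) (hproj : E.EnoughProjectives)
    {Y Z I X : 𝒜} {i : Y ⟶ Z} {p : Z ⟶ I} {w : i ≫ p = 0}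
    (h : E.conflation (ShortComplex.mk i p w)) (hY : E.Ext1Zero X Y) (hI : E.Ext1Zero X I) :
    E.Ext1Zero X Z := by
  obtain ⟨K, P, a, b, w', hc, hP⟩ := hproj X
  refine ext_of_extend E hc hP (fun f => ?_)
  obtain ⟨g, hg⟩ := exists_extend E hc hI (f ≫ p)
  obtain ⟨k, hk⟩ := hP _ h g
  dsimp at k hk
  obtain ⟨l, hl⟩ := ses_lift (E.shortExact_of_conflation _ h) (f - a ≫ k) (by
    rw [Preadditive.sub_comp, Category.assoc, hk, hg, sub_self])
  obtain ⟨m, hm⟩ := exists_extend E hc hY l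
  refine ⟨k + m ≫ i, ?_⟩
  rw [Preadditive.comp_add, ← Category.assoc, hm, hl]
  abel

lemma ext_left_ext (E : ExactStructure 𝒜) (hinj : E.EnoughInjectives)
    {X₁ X₂ X₃ N : 𝒜} {i : X₁ ⟶ X₂} {p : X₂ ⟶ X₃} {w : i ≫ p = 0}
    (h : E.conflation (ShortComplex.mk i p w)) (h1 : E.Ext1Zero X₁ N) (h3 : E.Ext1Zero X₃ N) :
    E.Ext1Zero X₂ N := by
  obtain ⟨I, C, a, b, w', hc, hI⟩ := hinj N
  refine ext_of_lift E hc hI (fun f => ?_)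
  obtain ⟨g, hg⟩ := exists_lift E hc h1 (i ≫ f)
  obtain ⟨k, hk⟩ := hI _ h g
  dsimp at k hk
  obtain ⟨l, hl⟩ := ses_desc (E.shortExact_of_conflation _ h) (f - k ≫ b) (by
    rw [Preadditive.comp_sub, ← Category.assoc, hk, hg, sub_self])
  obtain ⟨m, hm⟩ := exists_lift E hc h3 l
  refine ⟨k + p ≫ m, ?_⟩
  rw [Preadditive.add_comp, Category.assoc, hm, hl]
  abel

lemma ext_summand (E : ExactStructure 𝒜) {X M N : 𝒜} (s : M ⟶ X) (r : X ⟶ M) (h : s ≫ r = 𝟙 M)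
    (hX : E.Ext1Zero X N) : E.Ext1Zero M N := by
  intro Z i p w hc
  obtain ⟨g, hg⟩ := exists_lift E hc hX r
  exact exists_retraction (E.shortExact_of_conflation _ hc) (s := s ≫ g)
    (by rw [Category.assoc, hg, h])

lemma admMono_of_mono {X Y : 𝒜} (f : X ⟶ Y) [Mono f] :
    AdmMono (fun S : ShortComplex 𝒜 => S.ShortExact) f :=
  ⟨_, cokernel.π f, cokernel.condition f,
    { exact := ShortComplex.exact_of_g_is_cokernel _ (cokernelIsCokernel f)
      mono_f := by assumption
      epi_g := by dsimp; infer_instance }⟩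

lemma admEpi_of_epi {X Y : 𝒜} (f : X ⟶ Y) [Epi f] :
    AdmEpi (fun S : ShortComplex 𝒜 => S.ShortExact) f :=
  ⟨_, kernel.ι f, kernel.condition f,
    { exact := ShortComplex.exact_of_f_is_kernel _ (kernelIsKernel f)
      epi_g := by assumption
      mono_f := by dsimp; infer_instance }⟩

lemma mono_of_admMono {X Y : 𝒜} {f : X ⟶ Y}
    (h : AdmMono (fun S : ShortComplex 𝒜 => S.ShortExact) f) : Mono f := by
  obtain ⟨_, _, _, h⟩ := h
  exact h.mono_f

lemma epi_of_admEpi {X Y : 𝒜} {f : X ⟶ Y}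
    (h : AdmEpi (fun S : ShortComplex 𝒜 => S.ShortExact) f) : Epi f := by
  obtain ⟨_, _, _, h⟩ := h
  exact h.epi_g

/-- The maximal exact structure: all short exact sequences. -/
def maxExact (𝒜 : Type u) [Category.{v} 𝒜] [Abelian 𝒜] : ExactStructure 𝒜 where
  conflation S := S.ShortExact
  shortExact_of_conflation _ h := h
  conflation_of_iso _ _ e h := ShortComplex.shortExact_of_iso e h
  conflation_of_splitting _ s := s.shortExact
  admMono_comp f g hf hg := by
    have := mono_of_admMono hf
    have := mono_of_admMono hg
    exact admMono_of_mono _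
  admEpi_comp f g hf hg := by
    have := epi_of_admEpi hf
    have := epi_of_admEpi hg
    exact admEpi_of_epi _
  admMono_pushout i f hi := by
    have := mono_of_admMono hi
    exact admMono_of_mono _
  admEpi_pullback p g hp := by
    have := epi_of_admEpi hp
    exact admEpi_of_epi _

/-- Classical vanishing implies relative vanishing. -/
lemma ext_of_classical (E : ExactStructure 𝒜) {M N : 𝒜} (h : Ext1ZeroClassical M N) :
    E.Ext1Zero M N :=
  fun Z i p w hc => h Z i p w (E.shortExact_of_conflation _ hc)

/-- If the second map of a short exact sequence is factored through by an admissible epic,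
then the sequence is a conflation. -/
lemma conf_of_factor (E : ExactStructure 𝒜) {K P A Y X : 𝒜} {i : K ⟶ P} {p : P ⟶ A}
    {w : i ≫ p = 0} (h : E.conflation (ShortComplex.mk i p w))
    {j : Y ⟶ X} {q : X ⟶ A} {w' : j ≫ q = 0} (hT : (ShortComplex.mk j q w').ShortExact)
    (k : P ⟶ X) (hk : k ≫ q = p) : E.conflation (ShortComplex.mk j q w') := by
  obtain ⟨f, hf⟩ := ses_lift hT (i ≫ k) (by rw [Category.assoc, hk, w])
  obtain ⟨d, w'', hc, hd⟩ := pushout_conf E h f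
  have hc' := E.shortExact_of_conflation _ hc
  let φ : ShortComplex.mk (pushout.inr i f) d w'' ⟶ ShortComplex.mk j q w' :=
    { τ₁ := 𝟙 _
      τ₂ := pushout.desc k j hf.symm
      τ₃ := 𝟙 _
      comm₁₂ := by
        dsimp
        rw [Category.id_comp, pushout.inr_desc]
      comm₂₃ := by
        apply pushout.hom_ext
        · dsimp
          rw [pushout.inl_desc_assoc, hk, Category.comp_id, hd]
        · dsimp
          rw [pushout.inr_desc_assoc, w', Category.comp_id, w''] }
  have h1 : IsIso φ.τ₁ := by dsimp [φ]; infer_instance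
  have h3 : IsIso φ.τ₃ := by dsimp [φ]; infer_instance
  have h2 : IsIso φ.τ₂ := ShortComplex.isIso₂_of_shortExact_of_isIso₁₃ φ hc' hT
  have : IsIso φ := ShortComplex.isIso_of_isIso φ
  exact E.conflation_of_iso _ _ (asIso φ) hc

end ExactPaper

open ExactPaper CategoryTheory Limits in
/-- **Corollary 3.6(1)**: if `(𝒳,𝒴)` is a complete hereditary classical cotorsion pair
and `𝒳` contains all `ℰ`-projective objects, then `(𝒳, 𝒳^⊥ℰ)` is a complete hereditary
`ℰ`-cotorsion pair and every object `A` admits a monomorphic `𝒳^⊥ℰ`-preenvelope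
`j : A ⟶ Y` with `Coker j ∈ 𝒳`. -/
theorem eCotorsionPair_of_classical_cotorsionPair_proj
    {𝒜 : Type u} [Category.{v} 𝒜] [Abelian 𝒜]
    (E : ExactStructure 𝒜)
    (hproj : E.EnoughProjectives) (hinj : E.EnoughInjectives)
    (𝒳 𝒴 : Set 𝒜)
    (hpair : CompleteHereditaryClassicalCotorsionPair 𝒳 𝒴)
    (hP : ∀ P : 𝒜, E.EProjective P → P ∈ 𝒳) :
    E.CompleteHereditaryCotorsionPair 𝒳 (E.rightPerp 𝒳) ∧
      ∀ A : 𝒜, ∃ (Y : 𝒜) (j : A ⟶ Y),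
        Mono j ∧ IsPreenvelope (E.rightPerp 𝒳) j ∧ cokernel j ∈ 𝒳 := by
  obtain ⟨hX, hY, hc1, -, hher⟩ := hpair
  have hsum : ∀ X M : 𝒜, ∀ (s : M ⟶ X) (r : X ⟶ M), s ≫ r = 𝟙 M → X ∈ 𝒳 → M ∈ 𝒳 := by
    intro X M s r hsr hXX
    rw [hX] at hXX ⊢
    exact fun Y hYY => ext_summand (maxExact 𝒜) s r hsr (hXX Y hYY)
  have hext : ∀ X ∈ 𝒳, ∀ Y ∈ 𝒴, Ext1ZeroClassical X Y := by
    intro X hXX Y hYY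
    rw [hX] at hXX
    exact hXX Y hYY
  have hC1 : ∀ A : 𝒜, ∃ (Y X : 𝒜) (i : Y ⟶ X) (p : X ⟶ A) (w : i ≫ p = 0),
      E.conflation (ShortComplex.mk i p w) ∧ X ∈ 𝒳 ∧ Y ∈ E.rightPerp 𝒳 := by
    intro A
    obtain ⟨Y, X, j, q, w', hT, hXX, hYY⟩ := hc1 A
    obtain ⟨K, P, i, p, w, hc, hPP⟩ := hproj A
    obtain ⟨k, hk⟩ := exists_lift (maxExact 𝒜) (w := w') hT (hext P (hP P hPP) Y hYY) p
    exact ⟨Y, X, j, q, w', conf_of_factor E hc hT k hk, hXX,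
      fun X' hX' => ext_of_classical E (hext X' hX' Y hYY)⟩
  have hC2 : ∀ A : 𝒜, ∃ (Y' X' : 𝒜) (i : A ⟶ Y') (p : Y' ⟶ X') (w : i ≫ p = 0),
      E.conflation (ShortComplex.mk i p w) ∧ X' ∈ 𝒳 ∧ Y' ∈ E.rightPerp 𝒳 := by
    intro A
    obtain ⟨I, C, i, p, w, hc, hI⟩ := hinj A
    obtain ⟨Y, X, j, q, w', hT, hXX, hYY⟩ := hC1 C
    obtain ⟨d, w₁, hd, -⟩ := pullback_conf E hc q
    obtain ⟨e, w₂, he, -⟩ := pullback_conf E hT p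
    refine ⟨_, X, d, _, w₁, hd, hXX, fun X' hX' => ?_⟩
    have he' : E.Ext1Zero X' (pullback q p) := by
      refine ext_right_ext E hproj he (hYY X' hX') ?_
      intro Z a b w₃ h₃
      exact hI _ h₃ (𝟙 I)
    intro Z a b w₃ h₃
    obtain ⟨g, hg⟩ := exists_extend E h₃ he' (pullbackSymmetry p q).hom
    exact ⟨g ≫ (pullbackSymmetry p q).inv, by
      rw [← Category.assoc, hg, Iso.hom_inv_id]⟩
  have hleft : 𝒳 = E.leftPerp (E.rightPerp 𝒳) := by
    apply Set.Subset.antisymm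
    · intro X hXX Y hYY
      exact hYY X hXX
    · intro M hM
      obtain ⟨Y, X, j, q, w', hT, hXX, hYY⟩ := hC1 M
      obtain ⟨r, hr⟩ := hM Y hYY _ _ _ _ hT
      obtain ⟨s, hs⟩ := exists_section (E.shortExact_of_conflation _ hT) hr
      exact hsum X M s q hs hXX
  refine ⟨⟨hleft, rfl, hC1, hC2, hP, ?_, ?_⟩, ?_⟩
  · intro S hS h1 h3
    rw [hleft]
    intro Y hYY
    exact ext_left_ext E hinj hS (hYY _ h1) (hYY _ h3)
  · intro S hS h2 h3
    exact hher S (E.shortExact_of_conflation _ hS) h2 h3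
  · intro A
    obtain ⟨Y, X, j, q, w', hT, hXX, hYY⟩ := hC2 A
    have hS := E.shortExact_of_conflation _ hT
    have hm : Mono j := hS.mono_f
    have hq : Epi q := hS.epi_g
    refine ⟨Y, j, hm, ⟨hYY, fun Y' hY' g => exists_extend E hT (hY' X hXX) g⟩, ?_⟩
    obtain ⟨l, hl⟩ := ses_desc hS (cokernel.π j) (cokernel.condition j)
    refine hsum X _ (cokernel.desc j q w') l ?_ hXX
    apply coequalizer.hom_ext
    erw [cokernel.π_desc_assoc]
    rw [hl, Category.comp_id]
end
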